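/- arXiv:math/0210332 — 2 statements merged into one kernel-verified Lean document; each statement's English description precedes it below -/
import Mathlib

section
/- Let a = 0, so ω(ξ) = ξ|ξ| and s* = 1/2. There is NO constant C > 0 such that the estimate ‖∂ₓ(u₁u₂)‖_{X^{−1/2}_{1/2}} ≤ C ‖u₁‖_{X^{1/2}_{1/2}} ( ‖u₂‖_{X^{1/2}_{1/2}} + ‖u₂‖_{X^{1/2}_{1/2}}^{1/2} ‖u₂‖_{Y^{1/2}_{−1/2, 1/2}}^{1/2} ) + C ‖u₂‖_{X^{1/2}_{1/2}} ( ‖u₁‖_{X^{1/2}_{1/2}} + ‖u₁‖_{X^{1/2}_{1/2}}^{1/2} ‖u₁‖_{Y^{1/2}_{−1/2, 1/2}}^{1/2} ) holds for all Schwartz functions u₁, u₂ on ℝ². -/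
/-!
The estimate fails by a logarithm of the frequency, through an interaction of a wave of high
frequency `N` with a wave of frequency `O(1)`.

Take `u₁ = packet N` and `u₂ = packet 0`, where `packet N` is a Gaussian whose Fourier transform is
concentrated in the unit neighbourhood of the piece of the curve `λ = ω(ξ)` near `(N, N²)`:
`|f̂|² = 4π² exp (-(η² + ρ²))` with `η = ξ - N` and `ρ = λ - N² - 2Nη`. Since `λ - ω(ξ)` differs
from `ρ` by at most `η²`, its modulation is `O(1)`. Multiplication by `x` costs a factor `O(1 + N)`,
which the weight `(1 + |ξ|)^{-1/2}` in place of `(1 + |ξ|)^{1/2}` in the first part of the `Y` norm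
absorbs, and multiplication by `t` costs `O(1)`. Hence all norms on the right are `O(√(1 + N))`,
and `O(1)` for `u₂` (`packet_norms`), so the right-hand side is `O(√N)`.

The product is again a Gaussian, with
`|f̂|² = π² / (N² + 1) · exp (-(η²/2 + σ² / (2(N² + 1))))`, `σ = λ - N² - Nη`. At fixed `ξ ≈ N` it
is spread evenly over modulations up to size `N`, because the two waves have group velocities `2N`
apart. For each `2 ≤ 2^j ≤ N` the piece of `∂ₓ(u₁u₂)` at modulation `2^j` has energy at least a
multiple of `2^j N`, so it contributes at least a multiple of `2^{-j/2} (2^j N)^{1/2} = √N`. With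
`N = 2^J` the `ℓ¹` sum over `j = 1, …, J` in the `X^{-1/2}_{1/2}` norm is at least a multiple of
`J √N` (`Xnorm_packetProd_ge`), which is incompatible with `O(√N)` for large `J`.

The Fourier transforms are computed exactly: `norm_FT2_gauss_sq` for a general Gaussian wave packet,
and integration by parts for the factors `x`, `t` and for `∂ₓ`.
-/

open MeasureTheory Complex

noncomputable section

/-- The dispersive symbol `ω(ξ) = ξ |ξ|^(1+a)`. -/
def disp (a ξ : ℝ) : ℝ := ξ * |ξ| ^ (1 + a)

/-- Fourier transform on `ℝ`, convention `f̂(ξ) = ∫ e^{ixξ} f(x) dx`. -/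
def FT1 (f : ℝ → ℂ) (ξ : ℝ) : ℂ :=
  ∫ x : ℝ, Complex.exp (Complex.I * ((x * ξ : ℝ) : ℂ)) * f x

/-- Spacetime Fourier transform, convention `f̂(ξ,λ) = ∫ e^{i(xξ+tλ)} f(x,t) dx dt`,
for `f : ℝ × ℝ → ℂ` with first coordinate `x` (space) and second `t` (time). -/
def FT2 (f : ℝ × ℝ → ℂ) (ξ lam : ℝ) : ℂ :=
  ∫ p : ℝ × ℝ, Complex.exp (Complex.I * ((p.1 * ξ + p.2 * lam : ℝ) : ℂ)) * f p

/-- The dyadic cutoffs `χ_j`: `χ_0 = χ₀` and `χ_j(z) = χ(2^{-j} z)` for `j ≥ 1`. -/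
def chiJ (χ₀ χ : ℝ → ℝ) (j : ℕ) (z : ℝ) : ℝ :=
  if j = 0 then χ₀ z else χ ((2 : ℝ) ^ (-(j : ℝ)) * z)

/-- Hypotheses on the fixed dyadic cutoffs. -/
structure DyadicCutoffs (χ₀ χ : ℝ → ℝ) : Prop where
  smooth0 : ContDiff ℝ (⊤ : ℕ∞) χ₀
  even0 : ∀ z, χ₀ (-z) = χ₀ z
  mem0 : ∀ z, χ₀ z ∈ Set.Icc (0 : ℝ) 1
  supp0 : ∀ z, 2 < |z| → χ₀ z = 0
  one0 : ∀ z, |z| ≤ 1 → χ₀ z = 1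
  smooth1 : ContDiff ℝ (⊤ : ℕ∞) χ
  even1 : ∀ z, χ (-z) = χ z
  mem1 : ∀ z, χ z ∈ Set.Icc (0 : ℝ) 1
  supp1 : ∀ z, χ z ≠ 0 → 1 / 2 < |z| ∧ |z| < 2
  partition : ∀ z, ∑' j : ℕ, chiJ χ₀ χ j z = 1

/-- A smooth time cutoff supported in `[-1,1]`. -/
structure TimeCutoff (ψ : ℝ → ℝ) : Prop where
  smooth : ContDiff ℝ (⊤ : ℕ∞) ψ
  supp : ∀ t, ψ t ≠ 0 → |t| ≤ 1

/-- The norm `‖f‖_{X^b_s}`. -/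
def Xnorm (a : ℝ) (χ₀ χ : ℝ → ℝ) (b s : ℝ) (f : ℝ × ℝ → ℂ) : ℝ :=
  ∑' j : ℕ, (2 : ℝ) ^ ((j : ℝ) * b) *
    (∫ p : ℝ × ℝ, chiJ χ₀ χ j (p.2 - disp a p.1) * (1 + |p.1|) ^ (2 * s) *
      ‖FT2 f p.1 p.2‖ ^ 2) ^ ((1 : ℝ) / 2)

/-- The norm `‖f‖_{Y^b_{s₀,s₁}} = ‖x·f‖_{X^b_{s₀}} + ‖t·f‖_{X^b_{s₁}}`. -/
def Ynorm (a : ℝ) (χ₀ χ : ℝ → ℝ) (b s₀ s₁ : ℝ) (f : ℝ × ℝ → ℂ) : ℝ :=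
  Xnorm a χ₀ χ b s₀ (fun p => (p.1 : ℂ) * f p) +
    Xnorm a χ₀ χ b s₁ (fun p => (p.2 : ℂ) * f p)

/-- The norm `‖f‖_{Z^b_s} = ‖f‖_{X^b_s} + ‖f‖_{Y^b_{s-2s*,s}}`, where `s* = 1/2 + a/2`. -/
def Znorm (a : ℝ) (χ₀ χ : ℝ → ℝ) (b s : ℝ) (f : ℝ × ℝ → ℂ) : ℝ :=
  Xnorm a χ₀ χ b s f + Ynorm a χ₀ χ b (s - 2 * (1 / 2 + a / 2)) s f

/-- The norm `‖f‖_{X̃^b_s}`. -/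
def XtildeNorm (a b s : ℝ) (f : ℝ × ℝ → ℂ) : ℝ :=
  (∫ p : ℝ × ℝ, (1 + |p.2 - disp a p.1|) ^ (2 * b) * (1 + |p.1|) ^ (2 * s) *
    ‖FT2 f p.1 p.2‖ ^ 2) ^ ((1 : ℝ) / 2)

/-- The Sobolev norm `‖g‖_{H^s} = (∫ (1+|ξ|)^{2s} |ĝ(ξ)|² dξ)^{1/2}`. -/
def Hnorm (s : ℝ) (g : ℝ → ℂ) : ℝ :=
  (∫ ξ : ℝ, (1 + |ξ|) ^ (2 * s) * ‖FT1 g ξ‖ ^ 2) ^ ((1 : ℝ) / 2)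

/-- The weighted norm `‖g‖_{F^s} = ‖g‖_{H^s} + ‖x·g‖_{H^{s-2s*}}` (here `sstar = s*`). -/
def Fnorm (sstar s : ℝ) (g : ℝ → ℂ) : ℝ :=
  Hnorm s g + Hnorm (s - 2 * sstar) (fun x => (x : ℂ) * g x)

/-- The `L^p` norm `(∫ ‖f‖^p)^{1/p}`. -/
def Lpnorm {α : Type*} [MeasureSpace α] {E : Type*} [NormedAddCommGroup E]
    (p : ℝ) (f : α → E) : ℝ :=
  (∫ x, ‖f x‖ ^ p) ^ (1 / p)

/-- The linear propagator `W(t)`, defined via Fourier inversion so that its Fourier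
transform in `x` is `e^{itω(ξ)} û₀(ξ)`. -/
def Wgrp (a : ℝ) (u₀ : ℝ → ℂ) (t x : ℝ) : ℂ :=
  ((1 / (2 * Real.pi) : ℝ) : ℂ) *
    ∫ ξ : ℝ, Complex.exp (-(Complex.I * ((x * ξ : ℝ) : ℂ))) *
      (Complex.exp (Complex.I * ((t * disp a ξ : ℝ) : ℂ)) * FT1 u₀ ξ)

/-- The Fourier multiplier `D^σ` with symbol `|ξ|^σ`, via Fourier inversion. -/
def Dop (σ : ℝ) (g : ℝ → ℂ) (x : ℝ) : ℂ :=
  ((1 / (2 * Real.pi) : ℝ) : ℂ) *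
    ∫ ξ : ℝ, Complex.exp (-(Complex.I * ((x * ξ : ℝ) : ℂ))) *
      (((|ξ| ^ σ : ℝ) : ℂ) * FT1 g ξ)

/-! ### Gaussian wave packets -/

/-- The exponent `-(α x² + 2 β x t + γ t²) - i (k x + l t)` of a Gaussian wave packet. -/
def gaussExponent (α β γ k l : ℝ) (p : ℝ × ℝ) : ℂ :=
  -((α * p.1 ^ 2 + 2 * β * (p.1 * p.2) + γ * p.2 ^ 2 : ℝ) : ℂ) -
    Complex.I * ((k * p.1 + l * p.2 : ℝ) : ℂ)

/-- The Gaussian wave packet `exp (-(α x² + 2 β x t + γ t²) - i (k x + l t))`. -/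
def gauss (α β γ k l : ℝ) (p : ℝ × ℝ) : ℂ := Complex.exp (gaussExponent α β γ k l p)

lemma norm_iteratedFDeriv_cexp_le (n : ℕ) (z : ℂ) :
    ‖iteratedFDeriv ℝ n Complex.exp z‖ ≤ ‖Complex.exp z‖ := by
  induction n generalizing z with
  | zero => simp
  | succ n ih =>
    rw [← norm_iteratedFDeriv_fderiv]
    have h : fderiv ℝ Complex.exp = (ContinuousLinearMap.mul ℝ ℂ) ∘ Complex.exp := by
      funext w
      have h1 : HasFDerivAt Complex.exp ((ContinuousLinearMap.mul ℝ ℂ) (Complex.exp w)) w := by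
        have := ((Complex.hasDerivAt_exp w).hasFDerivAt).restrictScalars ℝ
        convert! this using 1
        ext; simp [mul_comm]
      exact h1.fderiv
    rw [h]
    refine (ContinuousLinearMap.norm_iteratedFDeriv_comp_left _
      (Complex.contDiff_exp (n := ⊤)).contDiffAt le_top).trans ?_
    calc _ ≤ 1 * ‖iteratedFDeriv ℝ n Complex.exp z‖ := by
          gcongr
          exact ContinuousLinearMap.opNorm_mul_le ℝ ℂ
      _ ≤ _ := by rw [one_mul]; exact ih z

lemma gaussExponent_temperate (α β γ k l : ℝ) :
    (gaussExponent α β γ k l).HasTemperateGrowth := by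
  have h1 : (fun p : ℝ × ℝ => p.1).HasTemperateGrowth :=
    (ContinuousLinearMap.fst ℝ ℝ ℝ).hasTemperateGrowth
  have h2 : (fun p : ℝ × ℝ => p.2).HasTemperateGrowth :=
    (ContinuousLinearMap.snd ℝ ℝ ℝ).hasTemperateGrowth
  have hq : (fun p : ℝ × ℝ =>
      α * p.1 ^ 2 + 2 * β * (p.1 * p.2) + γ * p.2 ^ 2).HasTemperateGrowth :=
    (((Function.HasTemperateGrowth.const α).mul (h1.pow 2)).add
      ((Function.HasTemperateGrowth.const (2 * β)).mul (h1.mul h2))).add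
      ((Function.HasTemperateGrowth.const γ).mul (h2.pow 2))
  have hl : (fun p : ℝ × ℝ => k * p.1 + l * p.2).HasTemperateGrowth :=
    ((Function.HasTemperateGrowth.const k).mul h1).add
      ((Function.HasTemperateGrowth.const l).mul h2)
  exact ((Function.Complex.hasTemperateGrowth_ofReal.comp hq).neg).sub
    ((Function.HasTemperateGrowth.const Complex.I).mul (Function.Complex.hasTemperateGrowth_ofReal.comp hl))

lemma gaussExponent_re (α β γ k l : ℝ) (p : ℝ × ℝ) :
    (gaussExponent α β γ k l p).re =
      -(α * p.1 ^ 2 + 2 * β * (p.1 * p.2) + γ * p.2 ^ 2) := by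
  unfold gaussExponent
  rw [Complex.sub_re, Complex.neg_re, Complex.ofReal_re, Complex.I_mul_re, Complex.ofReal_im]
  ring

lemma norm_gauss_le {α β γ : ℝ} (hα : 0 < α) (hD : 0 < α * γ - β ^ 2) (k l : ℝ) :
    ∃ c > 0, ∀ p : ℝ × ℝ, ‖gauss α β γ k l p‖ ≤ Real.exp (-(c * ‖p‖ ^ 2)) := by
  have hγ : 0 < γ := by
    by_contra h
    nlinarith [sq_nonneg β, mul_nonneg hα.le (neg_nonneg.2 (not_lt.1 h))]
  refine ⟨(α * γ - β ^ 2) / (α + γ), by positivity, fun p => ?_⟩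
  rw [gauss, Complex.norm_exp, gaussExponent_re]
  apply Real.exp_le_exp.2
  rw [neg_le_neg_iff]
  have hp : ‖p‖ ^ 2 ≤ p.1 ^ 2 + p.2 ^ 2 := by
    rw [Prod.norm_def]
    rcases max_cases ‖p.1‖ ‖p.2‖ with h | h <;> rw [h.1, Real.norm_eq_abs, sq_abs] <;>
      nlinarith [sq_nonneg p.1, sq_nonneg p.2]
  have h2 : (α * γ - β ^ 2) / (α + γ) * (p.1 ^ 2 + p.2 ^ 2) ≤
      α * p.1 ^ 2 + 2 * β * (p.1 * p.2) + γ * p.2 ^ 2 := by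
    rw [div_mul_eq_mul_div, div_le_iff₀ (by positivity)]
    nlinarith [sq_nonneg (α * p.1 + β * p.2), sq_nonneg (β * p.1 + γ * p.2)]
  refine le_trans ?_ h2
  gcongr

lemma one_add_pow_mul_exp_bounded {c : ℝ} (hc : 0 < c) (M : ℕ) :
    ∃ K : ℝ, ∀ r : ℝ, 0 ≤ r → (1 + r) ^ M * Real.exp (-(c * r ^ 2)) ≤ K := by
  refine ⟨M.factorial * Real.exp (1 + 1 / (4 * c)), fun r hr => ?_⟩
  have h1 : (1 + r) ^ M ≤ M.factorial * Real.exp (1 + r) := by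
    have := Real.pow_div_factorial_le_exp (x := 1 + r) (by linarith) M
    rwa [div_le_iff₀' (by positivity)] at this
  calc _ ≤ M.factorial * Real.exp (1 + r) * Real.exp (-(c * r ^ 2)) := by gcongr
    _ = M.factorial * Real.exp (1 + r - c * r ^ 2) := by
      rw [mul_assoc, ← Real.exp_add]; ring_nf
    _ ≤ _ := by
      gcongr
      have : 1 / (4 * c) - r + c * r ^ 2 = (2 * c * r - 1) ^ 2 / (4 * c) := by
        field_simp; ring
      have : 0 ≤ 1 / (4 * c) - r + c * r ^ 2 := by rw [this]; positivity
      linarith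

/-- A Gaussian wave packet with positive definite quadratic part, as a Schwartz function. -/
def gaussSchwartz (α β γ k l : ℝ) (hα : 0 < α) (hD : 0 < α * γ - β ^ 2) :
    SchwartzMap (ℝ × ℝ) ℂ where
  toFun := gauss α β γ k l
  smooth' := Complex.contDiff_exp.comp (gaussExponent_temperate α β γ k l).1
  decay' := by
    intro m n
    obtain ⟨c, hc, hle⟩ := norm_gauss_le hα hD k l
    obtain ⟨j, C, hC, hj⟩ :=
      (gaussExponent_temperate α β γ k l).norm_iteratedFDeriv_le_uniform n
    obtain ⟨K, hK⟩ := one_add_pow_mul_exp_bounded hc (m + j * n)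
    refine ⟨n.factorial * (C + 1) ^ n * K, fun p => ?_⟩
    have hb : ‖iteratedFDeriv ℝ n (gauss α β γ k l) p‖ ≤
        n.factorial * ‖gauss α β γ k l p‖ * ((C + 1) * (1 + ‖p‖) ^ j) ^ n := by
      refine norm_iteratedFDeriv_comp_le (N := (⊤ : ℕ∞)) (g := Complex.exp)
        (f := gaussExponent α β γ k l) Complex.contDiff_exp
        (gaussExponent_temperate α β γ k l).1 (mod_cast le_top) p
        (fun i _ => norm_iteratedFDeriv_cexp_le i _) (fun i hi hin => ?_)
      refine (hj i hin p).trans ?_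
      have h1 : (1 : ℝ) ≤ (C + 1) * (1 + ‖p‖) ^ j :=
        one_le_mul_of_one_le_of_one_le (by linarith)
          (one_le_pow₀ (by linarith [norm_nonneg p]))
      calc C * (1 + ‖p‖) ^ j ≤ (C + 1) * (1 + ‖p‖) ^ j := by gcongr; linarith
        _ ≤ _ := le_self_pow₀ h1 (by omega)
    have hn : (0 : ℝ) ≤ ‖p‖ := norm_nonneg p
    calc ‖p‖ ^ m * ‖iteratedFDeriv ℝ n (gauss α β γ k l) p‖
        ≤ (1 + ‖p‖) ^ m * (n.factorial * Real.exp (-(c * ‖p‖ ^ 2)) *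
            ((C + 1) * (1 + ‖p‖) ^ j) ^ n) := by
          refine mul_le_mul (by gcongr; linarith) (hb.trans ?_) (norm_nonneg _) (by positivity)
          gcongr
          exact hle p
      _ = n.factorial * (C + 1) ^ n *
            ((1 + ‖p‖) ^ (m + j * n) * Real.exp (-(c * ‖p‖ ^ 2))) := by
          rw [pow_add, pow_mul, mul_pow]; ring
      _ ≤ _ := by gcongr; exact hK _ hn

lemma continuous_gauss (α β γ k l : ℝ) : Continuous (gauss α β γ k l) := by
  unfold gauss gaussExponent
  fun_prop

/-- The Fourier phase only shifts the frequency parameters of a wave packet. -/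
lemma phase_mul_gauss (α β γ k l ξ lam : ℝ) (p : ℝ × ℝ) :
    Complex.exp (Complex.I * ((p.1 * ξ + p.2 * lam : ℝ) : ℂ)) * gauss α β γ k l p =
      gauss α β γ (k - ξ) (l - lam) p := by
  unfold gauss gaussExponent
  rw [← Complex.exp_add]
  push_cast
  ring_nf

lemma integrable_gauss {α β γ : ℝ} (hα : 0 < α) (hD : 0 < α * γ - β ^ 2) (k l : ℝ) :
    Integrable (gauss α β γ k l) :=
  (gaussSchwartz α β γ k l hα hD).integrable

lemma integrable_fst_mul_gauss {α β γ : ℝ} (hα : 0 < α) (hD : 0 < α * γ - β ^ 2) (k l : ℝ) :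
    Integrable (fun p : ℝ × ℝ => (p.1 : ℂ) * gauss α β γ k l p) := by
  refine ((gaussSchwartz α β γ k l hα hD).integrable_pow_mul volume 1).mono'
    ((by fun_prop : Continuous fun p : ℝ × ℝ => (p.1 : ℂ)).mul
      (continuous_gauss _ _ _ _ _)).aestronglyMeasurable (Filter.Eventually.of_forall fun p => ?_)
  rw [norm_mul, pow_one, Complex.norm_real]
  exact mul_le_mul_of_nonneg_right (norm_fst_le p) (norm_nonneg _)

lemma integrable_snd_mul_gauss {α β γ : ℝ} (hα : 0 < α) (hD : 0 < α * γ - β ^ 2) (k l : ℝ) :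
    Integrable (fun p : ℝ × ℝ => (p.2 : ℂ) * gauss α β γ k l p) := by
  refine ((gaussSchwartz α β γ k l hα hD).integrable_pow_mul volume 1).mono'
    ((by fun_prop : Continuous fun p : ℝ × ℝ => (p.2 : ℂ)).mul
      (continuous_gauss _ _ _ _ _)).aestronglyMeasurable (Filter.Eventually.of_forall fun p => ?_)
  rw [norm_mul, pow_one, Complex.norm_real]
  exact mul_le_mul_of_nonneg_right (norm_snd_le p) (norm_nonneg _)

lemma hasDerivAt_gauss_fst (α β γ k l x t : ℝ) :
    HasDerivAt (fun y : ℝ => gauss α β γ k l (y, t))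
      ((-2 * α * x - 2 * β * t - Complex.I * k) * gauss α β γ k l (x, t)) x := by
  have h : HasDerivAt (fun y : ℝ => gaussExponent α β γ k l (y, t))
      (-2 * α * x - 2 * β * t - Complex.I * k) x := by
    have h0 : HasDerivAt (fun y : ℝ => (y : ℂ)) 1 x := Complex.ofRealCLM.hasDerivAt
    have h1 := (((h0.pow 2).const_mul (α : ℂ)).add
      ((h0.mul_const (t : ℂ)).const_mul (2 * (β : ℂ)))).add_const ((γ : ℂ) * (t : ℂ) ^ 2)
    have h2 := ((h0.const_mul (k : ℂ)).add_const ((l : ℂ) * t)).const_mul Complex.I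
    have h3 := h1.neg.sub h2
    convert! h3 using 1
    · funext y
      simp [gaussExponent]
    · push_cast; ring
  have := h.cexp
  rw [mul_comm] at this
  exact this

lemma hasDerivAt_gauss_snd (α β γ k l x t : ℝ) :
    HasDerivAt (fun s : ℝ => gauss α β γ k l (x, s))
      ((-2 * β * x - 2 * γ * t - Complex.I * l) * gauss α β γ k l (x, t)) t := by
  have h : HasDerivAt (fun y : ℝ => gaussExponent α β γ k l (x, y))
      (-2 * β * x - 2 * γ * t - Complex.I * l) t := by
    have h0 : HasDerivAt (fun y : ℝ => (y : ℂ)) 1 t := Complex.ofRealCLM.hasDerivAt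
    have h1 := (((h0.const_mul (x : ℂ)).const_mul (2 * (β : ℂ))).const_add
      ((α : ℂ) * (x : ℂ) ^ 2)).add ((h0.pow 2).const_mul (γ : ℂ))
    have h2 := ((h0.const_mul (l : ℂ)).const_add ((k : ℂ) * x)).const_mul Complex.I
    have h3 := h1.neg.sub h2
    convert! h3 using 1
    · funext y
      simp [gaussExponent]
    · push_cast; ring
  have := h.cexp
  rw [mul_comm] at this
  exact this

lemma norm_cpow_half_sq {r : ℝ} (hr : 0 < r) : ‖(r : ℂ) ^ (1 / 2 : ℂ)‖ ^ 2 = r := by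
  rw [Complex.norm_cpow_eq_rpow_re_of_pos hr, ← Real.rpow_natCast, ← Real.rpow_mul hr.le]
  norm_num

lemma integral_gauss_snd {γ : ℝ} (hγ : 0 < γ) (α β k l x : ℝ) :
    ∫ t : ℝ, gauss α β γ k l (x, t) = ((Real.pi / γ : ℝ) : ℂ) ^ (1 / 2 : ℂ) *
      Complex.exp (((-((α * γ - β ^ 2) / γ) : ℝ) : ℂ) * (x : ℂ) ^ 2 +
        (Complex.I * ((β * l / γ - k : ℝ) : ℂ)) * x + ((-(l ^ 2 / (4 * γ)) : ℝ) : ℂ)) := by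
  have hγ' : (γ : ℂ) ≠ 0 := by exact_mod_cast hγ.ne'
  have h := integral_cexp_quadratic (b := -(γ : ℂ)) (by simpa using hγ)
    (-2 * β * x - Complex.I * l) (-α * x ^ 2 - Complex.I * k * x)
  rw [show (fun t : ℝ => gauss α β γ k l (x, t)) = fun t : ℝ =>
    Complex.exp (-(γ : ℂ) * (t : ℂ) ^ 2 + (-2 * β * x - Complex.I * l) * t +
      (-α * x ^ 2 - Complex.I * k * x)) from ?_, h]
  · congr 1
    · push_cast; simp
    · congr 1
      push_cast
      field_simp
      ring_nf
      simp only [Complex.I_sq]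
      ring
  · funext t
    unfold gauss gaussExponent
    push_cast
    ring_nf

lemma norm_integral_gauss_sq {α β γ : ℝ} (hα : 0 < α) (hD : 0 < α * γ - β ^ 2) (k l : ℝ) :
    ‖∫ p : ℝ × ℝ, gauss α β γ k l p‖ ^ 2 = Real.pi ^ 2 / (α * γ - β ^ 2) *
      Real.exp (-((γ * k ^ 2 - 2 * β * (k * l) + α * l ^ 2) / (2 * (α * γ - β ^ 2)))) := by
  have hγ : 0 < γ := by
    by_contra h
    nlinarith [sq_nonneg β, mul_nonneg hα.le (neg_nonneg.2 (not_lt.1 h))]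
  set D := α * γ - β ^ 2 with hDdef
  rw [Measure.volume_eq_prod, integral_prod _ (integrable_gauss hα hD k l)]
  simp_rw [integral_gauss_snd hγ, integral_const_mul]
  have hDγ : 0 < D / γ := by positivity
  rw [integral_cexp_quadratic (by rw [Complex.ofReal_re]; linarith)]
  rw [show (Real.pi : ℂ) / -((-(D / γ) : ℝ) : ℂ) = ((Real.pi / (D / γ) : ℝ) : ℂ) by
    push_cast; simp]
  rw [norm_mul, norm_mul, mul_pow, mul_pow, norm_cpow_half_sq (by positivity),
    norm_cpow_half_sq (by positivity), Complex.norm_exp, ← Real.exp_nat_mul]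
  rw [show (((-(l ^ 2 / (4 * γ)) : ℝ) : ℂ) - (Complex.I * ((β * l / γ - k : ℝ) : ℂ)) ^ 2 /
      (4 * ((-(D / γ) : ℝ) : ℂ))) =
      ((-(l ^ 2 / (4 * γ)) - (β * l / γ - k) ^ 2 / (4 * (D / γ)) : ℝ) : ℂ) by
    rw [mul_pow, Complex.I_sq]
    push_cast
    rw [mul_neg, neg_one_mul, neg_div_neg_eq], Complex.ofReal_re]
  rw [← mul_assoc]
  congr 1
  · field_simp
  · congr 1
    have : γ * k ^ 2 - 2 * β * (k * l) + α * l ^ 2 = (D * l ^ 2 + (β * l - γ * k) ^ 2) / γ := by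
      rw [hDdef]; field_simp; ring
    rw [this]
    push_cast
    field_simp
    ring

lemma integral_deriv_gauss_snd {α β γ : ℝ} (hα : 0 < α) (hD : 0 < α * γ - β ^ 2) (k l : ℝ) :
    ∫ p : ℝ × ℝ, (-2 * β * p.1 - 2 * γ * p.2 - Complex.I * l) * gauss α β γ k l p = 0 := by
  have hi := integrable_gauss hα hD k l
  have hi' : Integrable (fun p : ℝ × ℝ =>
      (-2 * β * p.1 - 2 * γ * p.2 - Complex.I * l) * gauss α β γ k l p) := by
    convert! (((integrable_fst_mul_gauss hα hD k l).const_mul (-2 * β : ℂ)).sub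
      ((integrable_snd_mul_gauss hα hD k l).const_mul (2 * γ : ℂ))).sub
      (hi.const_mul (Complex.I * l)) using 1
    funext p
    simp only [Pi.sub_apply]
    ring
  rw [Measure.volume_eq_prod] at hi hi' ⊢
  rw [integral_prod _ hi']
  refine integral_eq_zero_of_ae ?_
  filter_upwards [hi.prod_right_ae, hi'.prod_right_ae] with x h1 h2
  exact integral_eq_zero_of_hasDerivAt_of_integrable
    (fun t => hasDerivAt_gauss_snd α β γ k l x t) h2 h1

lemma integral_deriv_gauss_fst {α β γ : ℝ} (hα : 0 < α) (hD : 0 < α * γ - β ^ 2) (k l : ℝ) :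
    ∫ p : ℝ × ℝ, (-2 * α * p.1 - 2 * β * p.2 - Complex.I * k) * gauss α β γ k l p = 0 := by
  have hi := integrable_gauss hα hD k l
  have hi' : Integrable (fun p : ℝ × ℝ =>
      (-2 * α * p.1 - 2 * β * p.2 - Complex.I * k) * gauss α β γ k l p) := by
    convert! (((integrable_fst_mul_gauss hα hD k l).const_mul (-2 * α : ℂ)).sub
      ((integrable_snd_mul_gauss hα hD k l).const_mul (2 * β : ℂ))).sub
      (hi.const_mul (Complex.I * k)) using 1
    funext p
    simp only [Pi.sub_apply]
    ring
  rw [Measure.volume_eq_prod] at hi hi' ⊢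
  rw [integral_prod_symm _ hi']
  refine integral_eq_zero_of_ae ?_
  filter_upwards [hi.prod_left_ae, hi'.prod_left_ae] with t h1 h2
  exact integral_eq_zero_of_hasDerivAt_of_integrable
    (fun x => hasDerivAt_gauss_fst α β γ k l x t) h2 h1

lemma integral_linear_mul_gauss {α β γ : ℝ} (hα : 0 < α) (hD : 0 < α * γ - β ^ 2) (k l : ℝ)
    (a b c : ℂ) :
    ∫ p : ℝ × ℝ, (a * p.1 - b * p.2 - c) * gauss α β γ k l p =
      a * (∫ p : ℝ × ℝ, (p.1 : ℂ) * gauss α β γ k l p) -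
        b * (∫ p : ℝ × ℝ, (p.2 : ℂ) * gauss α β γ k l p) -
        c * ∫ p : ℝ × ℝ, gauss α β γ k l p := by
  have i1 := (integrable_fst_mul_gauss hα hD k l).const_mul a
  have i2 := (integrable_snd_mul_gauss hα hD k l).const_mul b
  have i3 := (integrable_gauss hα hD k l).const_mul c
  have i12 : Integrable (fun p : ℝ × ℝ =>
      a * ((p.1 : ℂ) * gauss α β γ k l p) - b * ((p.2 : ℂ) * gauss α β γ k l p)) := i1.sub i2
  rw [← integral_const_mul, ← integral_const_mul, ← integral_const_mul,
    ← integral_sub i1 i2, ← integral_sub i12 i3]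
  congr 1
  funext p
  ring

/-- First moments of a wave packet, obtained by solving the linear system given by the two
integrations by parts. -/
lemma integral_moments_gauss {α β γ : ℝ} (hα : 0 < α) (hD : 0 < α * γ - β ^ 2) (k l : ℝ) :
    (∫ p : ℝ × ℝ, (p.1 : ℂ) * gauss α β γ k l p =
      (Complex.I * ((β * l - γ * k) / (2 * (α * γ - β ^ 2)) : ℝ)) *
        ∫ p : ℝ × ℝ, gauss α β γ k l p) ∧
    (∫ p : ℝ × ℝ, (p.2 : ℂ) * gauss α β γ k l p =
      (Complex.I * ((β * k - α * l) / (2 * (α * γ - β ^ 2)) : ℝ)) *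
        ∫ p : ℝ × ℝ, gauss α β γ k l p) := by
  have h1 := integral_deriv_gauss_fst hα hD k l
  have h2 := integral_deriv_gauss_snd hα hD k l
  rw [integral_linear_mul_gauss hα hD] at h1 h2
  set A := ∫ p : ℝ × ℝ, (p.1 : ℂ) * gauss α β γ k l p
  set B := ∫ p : ℝ × ℝ, (p.2 : ℂ) * gauss α β γ k l p
  set J := ∫ p : ℝ × ℝ, gauss α β γ k l p
  have hD' : (α : ℂ) * γ - β ^ 2 ≠ 0 := by exact_mod_cast hD.ne'
  constructor
  · push_cast
    rw [mul_div_assoc', div_mul_eq_mul_div, eq_div_iff (mul_ne_zero two_ne_zero hD')]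
    linear_combination (-γ : ℂ) * h1 + (β : ℂ) * h2
  · push_cast
    rw [mul_div_assoc', div_mul_eq_mul_div, eq_div_iff (mul_ne_zero two_ne_zero hD')]
    linear_combination (β : ℂ) * h1 - (α : ℂ) * h2

/-! ### Fourier transforms of wave packets -/

lemma FT2_gauss (α β γ k l ξ lam : ℝ) :
    FT2 (gauss α β γ k l) ξ lam = ∫ p : ℝ × ℝ, gauss α β γ (k - ξ) (l - lam) p := by
  simp_rw [FT2, phase_mul_gauss]

lemma norm_FT2_gauss_sq {α β γ : ℝ} (hα : 0 < α) (hD : 0 < α * γ - β ^ 2) (k l ξ lam : ℝ) :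
    ‖FT2 (gauss α β γ k l) ξ lam‖ ^ 2 = Real.pi ^ 2 / (α * γ - β ^ 2) *
      Real.exp (-((γ * (k - ξ) ^ 2 - 2 * β * ((k - ξ) * (l - lam)) + α * (l - lam) ^ 2) /
        (2 * (α * γ - β ^ 2)))) := by
  rw [FT2_gauss, norm_integral_gauss_sq hα hD]

lemma norm_FT2_fst_mul_gauss_sq {α β γ : ℝ} (hα : 0 < α) (hD : 0 < α * γ - β ^ 2)
    (k l ξ lam : ℝ) :
    ‖FT2 (fun p => (p.1 : ℂ) * gauss α β γ k l p) ξ lam‖ ^ 2 =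
      ((β * (l - lam) - γ * (k - ξ)) / (2 * (α * γ - β ^ 2))) ^ 2 *
        ‖FT2 (gauss α β γ k l) ξ lam‖ ^ 2 := by
  rw [FT2_gauss, FT2]
  simp_rw [mul_left_comm (Complex.exp _), phase_mul_gauss]
  rw [(integral_moments_gauss hα hD _ _).1, norm_mul, norm_mul, Complex.norm_I, one_mul,
    Complex.norm_real, mul_pow, Real.norm_eq_abs, sq_abs]

lemma norm_FT2_snd_mul_gauss_sq {α β γ : ℝ} (hα : 0 < α) (hD : 0 < α * γ - β ^ 2)
    (k l ξ lam : ℝ) :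
    ‖FT2 (fun p => (p.2 : ℂ) * gauss α β γ k l p) ξ lam‖ ^ 2 =
      ((β * (k - ξ) - α * (l - lam)) / (2 * (α * γ - β ^ 2))) ^ 2 *
        ‖FT2 (gauss α β γ k l) ξ lam‖ ^ 2 := by
  rw [FT2_gauss, FT2]
  simp_rw [mul_left_comm (Complex.exp _), phase_mul_gauss]
  rw [(integral_moments_gauss hα hD _ _).2, norm_mul, norm_mul, Complex.norm_I, one_mul,
    Complex.norm_real, mul_pow, Real.norm_eq_abs, sq_abs]

lemma norm_FT2_deriv_gauss_sq {α β γ : ℝ} (hα : 0 < α) (hD : 0 < α * γ - β ^ 2)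
    (k l ξ lam : ℝ) :
    ‖FT2 (fun p => deriv (fun x => gauss α β γ k l (x, p.2)) p.1) ξ lam‖ ^ 2 =
      ξ ^ 2 * ‖FT2 (gauss α β γ k l) ξ lam‖ ^ 2 := by
  rw [FT2_gauss, FT2]
  simp_rw [(hasDerivAt_gauss_fst α β γ k l _ _).deriv]
  simp_rw [mul_left_comm (Complex.exp _), phase_mul_gauss]
  have h := integral_deriv_gauss_fst hα hD (k - ξ) (l - lam)
  rw [integral_linear_mul_gauss hα hD] at h ⊢
  rw [show ∀ A B J : ℂ, -2 * α * A - 2 * β * B - Complex.I * k * J =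
      (-2 * α * A - 2 * β * B - Complex.I * ((k - ξ : ℝ) : ℂ) * J) + -(Complex.I * (ξ : ℂ) * J) from
      fun A B J => by push_cast; ring, h, zero_add, norm_neg, norm_mul, norm_mul,
    Complex.norm_I, one_mul, Complex.norm_real, mul_pow, Real.norm_eq_abs, sq_abs]

/-! ### Dyadic cutoffs and upper bounds for the norms -/

lemma disp_zero (ξ : ℝ) : disp 0 ξ = ξ * |ξ| := by simp [disp]

lemma continuous_disp_zero : Continuous (disp 0) := by
  rw [show disp 0 = fun ξ => ξ * |ξ| from funext disp_zero]
  fun_prop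

/-- Second-order Taylor bound for `ω` at `N`; it holds also for `ξ < 0` since `|ω''| ≤ 2`. -/
lemma abs_disp_sub_le {N : ℝ} (hN : 0 ≤ N) (ξ : ℝ) :
    |disp 0 ξ - N ^ 2 - 2 * N * (ξ - N)| ≤ (ξ - N) ^ 2 := by
  rw [disp_zero, abs_le]
  rcases le_total 0 ξ with h | h
  · rw [abs_of_nonneg h]
    constructor <;> nlinarith [sq_nonneg (ξ - N)]
  · rw [abs_of_nonpos h]
    constructor <;> nlinarith [sq_nonneg (ξ - N), sq_nonneg ξ, mul_nonneg hN (neg_nonneg.2 h)]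

lemma chiJ_zero (χ₀ χ : ℝ → ℝ) (z : ℝ) : chiJ χ₀ χ 0 z = χ₀ z := by simp [chiJ]

lemma chiJ_pos (χ₀ χ : ℝ → ℝ) {j : ℕ} (hj : j ≠ 0) (z : ℝ) :
    chiJ χ₀ χ j z = χ (((2 : ℝ) ^ j)⁻¹ * z) := by
  simp [chiJ, hj, Real.rpow_neg]

lemma chiJ_mem {χ₀ χ : ℝ → ℝ} (hχ : DyadicCutoffs χ₀ χ) (j : ℕ) (z : ℝ) :
    chiJ χ₀ χ j z ∈ Set.Icc (0 : ℝ) 1 := by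
  rcases eq_or_ne j 0 with rfl | hj
  · rw [chiJ_zero]; exact hχ.mem0 z
  · rw [chiJ_pos _ _ hj]; exact hχ.mem1 _

lemma continuous_chiJ {χ₀ χ : ℝ → ℝ} (hχ : DyadicCutoffs χ₀ χ) (j : ℕ) :
    Continuous (chiJ χ₀ χ j) := by
  rcases eq_or_ne j 0 with rfl | hj
  · rw [funext (chiJ_zero χ₀ χ)]; exact hχ.smooth0.continuous
  · rw [funext (chiJ_pos χ₀ χ hj)]
    exact hχ.smooth1.continuous.comp (by fun_prop)

lemma abs_of_chiJ_ne_zero {χ₀ χ : ℝ → ℝ} (hχ : DyadicCutoffs χ₀ χ) {j : ℕ} (hj : j ≠ 0)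
    {z : ℝ} (h : chiJ χ₀ χ j z ≠ 0) : 2 ^ j ≤ 2 * |z| ∧ |z| ≤ 2 * 2 ^ j := by
  rw [chiJ_pos _ _ hj] at h
  have h2 := hχ.supp1 _ h
  have hp : (0 : ℝ) < 2 ^ j := by positivity
  rw [abs_mul, abs_of_pos (inv_pos.2 hp), inv_mul_eq_div, lt_div_iff₀ hp, div_lt_iff₀ hp] at h2
  exact ⟨by linarith, by linarith⟩

lemma chiJ_le {χ₀ χ : ℝ → ℝ} (hχ : DyadicCutoffs χ₀ χ) (j : ℕ) (z : ℝ) :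
    chiJ χ₀ χ j z ≤ 8 * ((2 : ℝ) ^ j)⁻¹ ^ 3 * (1 + |z|) ^ 3 := by
  by_cases h : chiJ χ₀ χ j z = 0
  · rw [h]; positivity
  have h1 : (2 : ℝ) ^ j ≤ 2 * (1 + |z|) := by
    rcases eq_or_ne j 0 with rfl | hj
    · have := abs_nonneg z
      rw [pow_zero]; linarith
    · linarith [(abs_of_chiJ_ne_zero hχ hj h).1]
  have h2 : 1 ≤ ((2 : ℝ) ^ j)⁻¹ * (2 * (1 + |z|)) := by
    rw [inv_mul_eq_div, one_le_div (by positivity)]; exact h1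
  calc chiJ χ₀ χ j z ≤ 1 := (chiJ_mem hχ j z).2
    _ ≤ (((2 : ℝ) ^ j)⁻¹ * (2 * (1 + |z|))) ^ 3 := one_le_pow₀ h2
    _ = _ := by ring

lemma Xterm_nonneg {χ₀ χ : ℝ → ℝ} (hχ : DyadicCutoffs χ₀ χ) (s : ℝ) (f : ℝ × ℝ → ℂ) (j : ℕ)
    (p : ℝ × ℝ) : 0 ≤ chiJ χ₀ χ j (p.2 - disp 0 p.1) * (1 + |p.1|) ^ (2 * s) *
      ‖FT2 f p.1 p.2‖ ^ 2 := by
  have := (chiJ_mem hχ j (p.2 - disp 0 p.1)).1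
  positivity

lemma Xnorm_nonneg {χ₀ χ : ℝ → ℝ} (hχ : DyadicCutoffs χ₀ χ) (b s : ℝ) (f : ℝ × ℝ → ℂ) :
    0 ≤ Xnorm 0 χ₀ χ b s f := by
  refine tsum_nonneg fun j => mul_nonneg (by positivity) (Real.rpow_nonneg ?_ _)
  exact integral_nonneg fun p => Xterm_nonneg hχ s f j p

/-- The sum over dyadic modulations is controlled by an `L²` bound with the stronger weight
`(1 + |λ - ω(ξ)|)³`. -/
lemma Xnorm_le {χ₀ χ : ℝ → ℝ} (hχ : DyadicCutoffs χ₀ χ) (s : ℝ) (f : ℝ × ℝ → ℂ)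
    (H : ℝ × ℝ → ℝ) (hH : Integrable H)
    (hle : ∀ p, (1 + |p.2 - disp 0 p.1|) ^ 3 * ((1 + |p.1|) ^ (2 * s) *
      ‖FT2 f p.1 p.2‖ ^ 2) ≤ H p) :
    Xnorm 0 χ₀ χ (1 / 2) s f ≤ 2 * √(8 * ∫ p, H p) := by
  have hterm : ∀ j : ℕ, (2 : ℝ) ^ ((j : ℝ) * (1 / 2)) *
      (∫ p : ℝ × ℝ, chiJ χ₀ χ j (p.2 - disp 0 p.1) * (1 + |p.1|) ^ (2 * s) *
        ‖FT2 f p.1 p.2‖ ^ 2) ^ ((1 : ℝ) / 2) ≤ (1 / 2 : ℝ) ^ j * √(8 * ∫ p, H p) := by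
    intro j
    have h1 : (∫ p : ℝ × ℝ, chiJ χ₀ χ j (p.2 - disp 0 p.1) * (1 + |p.1|) ^ (2 * s) *
        ‖FT2 f p.1 p.2‖ ^ 2) ≤ ∫ p, 8 * ((2 : ℝ) ^ j)⁻¹ ^ 3 * H p := by
      refine integral_mono_of_nonneg (Filter.Eventually.of_forall fun p => Xterm_nonneg hχ s f j p)
        (hH.const_mul _) (Filter.Eventually.of_forall fun p => ?_)
      calc _ = chiJ χ₀ χ j (p.2 - disp 0 p.1) * ((1 + |p.1|) ^ (2 * s) *
            ‖FT2 f p.1 p.2‖ ^ 2) := by ring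
        _ ≤ (8 * ((2 : ℝ) ^ j)⁻¹ ^ 3 * (1 + |p.2 - disp 0 p.1|) ^ 3) *
            ((1 + |p.1|) ^ (2 * s) * ‖FT2 f p.1 p.2‖ ^ 2) := by
          gcongr
          exact chiJ_le hχ j _
        _ = 8 * ((2 : ℝ) ^ j)⁻¹ ^ 3 * ((1 + |p.2 - disp 0 p.1|) ^ 3 *
            ((1 + |p.1|) ^ (2 * s) * ‖FT2 f p.1 p.2‖ ^ 2)) := by ring
        _ ≤ _ := mul_le_mul_of_nonneg_left (hle p) (by positivity)
    rw [integral_const_mul] at h1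
    rw [← Real.sqrt_eq_rpow, Real.rpow_mul (by norm_num), ← Real.sqrt_eq_rpow, Real.rpow_natCast,
      ← Real.sqrt_mul (by positivity)]
    calc _ ≤ √(((1 / 2 : ℝ) ^ j) ^ 2 * (8 * ∫ p, H p)) := by
          apply Real.sqrt_le_sqrt
          calc _ ≤ (2 : ℝ) ^ j * (8 * ((2 : ℝ) ^ j)⁻¹ ^ 3 * ∫ p, H p) := by gcongr
            _ = _ := by
              rw [show (1 / 2 : ℝ) ^ j = ((2 : ℝ) ^ j)⁻¹ by rw [one_div, inv_pow]]
              field_simp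
      _ = _ := by rw [Real.sqrt_mul (by positivity), Real.sqrt_sq (by positivity)]
  have hs : Summable fun j : ℕ => (1 / 2 : ℝ) ^ j * √(8 * ∫ p, H p) :=
    summable_geometric_two.mul_right _
  have hs' : Summable fun j : ℕ => (2 : ℝ) ^ ((j : ℝ) * (1 / 2)) *
      (∫ p : ℝ × ℝ, chiJ χ₀ χ j (p.2 - disp 0 p.1) * (1 + |p.1|) ^ (2 * s) *
        ‖FT2 f p.1 p.2‖ ^ 2) ^ ((1 : ℝ) / 2) :=
    Summable.of_nonneg_of_le (fun j => mul_nonneg (by positivity)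
      (Real.rpow_nonneg (integral_nonneg fun p => Xterm_nonneg hχ s f j p) _)) hterm hs
  calc _ ≤ ∑' j : ℕ, (1 / 2 : ℝ) ^ j * √(8 * ∫ p, H p) := hs'.tsum_le_tsum hterm hs
    _ = _ := by rw [tsum_mul_right, tsum_geometric_two]

lemma measurePreserving_shear (a : ℝ) {g : ℝ → ℝ} (hg : Continuous g) :
    MeasurePreserving (fun p : ℝ × ℝ => (p.1 - a, p.2 - g p.1)) volume volume := by
  rw [Measure.volume_eq_prod]
  refine MeasurePreserving.skew_product (g := fun x y => y - g x)
    (measurePreserving_sub_right volume a) ?_ (Filter.Eventually.of_forall fun x => ?_)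
  · exact (by fun_prop : Continuous fun p : ℝ × ℝ => p.2 - g p.1).measurable
  · exact (measurePreserving_sub_right volume (g x)).map_eq

lemma integral_comp_shear (a : ℝ) {g : ℝ → ℝ} (hg : Continuous g) {F : ℝ × ℝ → ℝ}
    (hF : Integrable F) :
    Integrable (fun p : ℝ × ℝ => F (p.1 - a, p.2 - g p.1)) ∧
      ∫ p : ℝ × ℝ, F (p.1 - a, p.2 - g p.1) = ∫ p, F p := by
  have h := measurePreserving_shear a hg
  refine ⟨h.integrable_comp_of_integrable hF, ?_⟩
  have h2 := integral_map (f := F) h.aemeasurable (by rw [h.map_eq]; exact hF.aestronglyMeasurable)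
  rw [h.map_eq] at h2
  exact h2.symm

/-- The frequency-`N` wave packet. Its Fourier transform is concentrated in the unit
neighbourhood of `(N, N²)` in the coordinates `ξ - N` and `λ - N² - 2N(ξ - N)`. -/
def packet (N : ℝ) : ℝ × ℝ → ℂ := gauss (1 / 2) N (2 * N ^ 2 + 1 / 2) N (N ^ 2)

lemma packet_det (N : ℝ) : 0 < 1 / 2 * (2 * N ^ 2 + 1 / 2) - N ^ 2 := by ring_nf; norm_num

lemma norm_FT2_packet_sq (N ξ lam : ℝ) :
    ‖FT2 (packet N) ξ lam‖ ^ 2 = 4 * Real.pi ^ 2 *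
      Real.exp (-((ξ - N) ^ 2 + (lam - N ^ 2 - 2 * N * (ξ - N)) ^ 2)) := by
  rw [packet, norm_FT2_gauss_sq (by norm_num) (packet_det N)]
  rw [show (1 : ℝ) / 2 * (2 * N ^ 2 + 1 / 2) - N ^ 2 = 1 / 4 by ring]
  congr 1
  · ring
  · congr 1
    ring

lemma norm_FT2_fst_packet_sq (N ξ lam : ℝ) :
    ‖FT2 (fun p => (p.1 : ℂ) * packet N p) ξ lam‖ ^ 2 =
      ((ξ - N) - 2 * N * (lam - N ^ 2 - 2 * N * (ξ - N))) ^ 2 *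
        ‖FT2 (packet N) ξ lam‖ ^ 2 := by
  unfold packet
  rw [norm_FT2_fst_mul_gauss_sq (by norm_num) (packet_det N)]
  rw [show (1 : ℝ) / 2 * (2 * N ^ 2 + 1 / 2) - N ^ 2 = 1 / 4 by ring]
  ring

lemma norm_FT2_snd_packet_sq (N ξ lam : ℝ) :
    ‖FT2 (fun p => (p.2 : ℂ) * packet N p) ξ lam‖ ^ 2 =
      (lam - N ^ 2 - 2 * N * (ξ - N)) ^ 2 * ‖FT2 (packet N) ξ lam‖ ^ 2 := by
  unfold packet
  rw [norm_FT2_snd_mul_gauss_sq (by norm_num) (packet_det N)]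
  rw [show (1 : ℝ) / 2 * (2 * N ^ 2 + 1 / 2) - N ^ 2 = 1 / 4 by ring]
  ring

lemma integrable_gauss_real {c : ℝ} (hc : 0 < c) :
    Integrable fun p : ℝ × ℝ => Real.exp (-c * p.1 ^ 2) * Real.exp (-c * p.2 ^ 2) := by
  rw [Measure.volume_eq_prod]
  exact (integrable_exp_neg_mul_sq hc).mul_prod (integrable_exp_neg_mul_sq hc)

/-- Any function whose Fourier transform is localized like that of `packet N`, up to a polynomial
loss and a factor `√(1 + N)` after the Sobolev weight, has `X^{1/2}_s` norm `O(√(1 + N))`. -/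
lemma Xnorm_le_of_localized {χ₀ χ : ℝ → ℝ} (hχ : DyadicCutoffs χ₀ χ) :
    ∃ K > 0, ∀ N : ℝ, 0 ≤ N → ∀ (s : ℝ) (f : ℝ × ℝ → ℂ),
      (∀ ξ lam : ℝ, (1 + |ξ|) ^ (2 * s) * ‖FT2 f ξ lam‖ ^ 2 ≤ (1 + N) * (16 *
        (1 + (ξ - N) ^ 2 + (lam - N ^ 2 - 2 * N * (ξ - N)) ^ 2) ^ 2 *
          (4 * Real.pi ^ 2 *
            Real.exp (-((ξ - N) ^ 2 + (lam - N ^ 2 - 2 * N * (ξ - N)) ^ 2))))) →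
      Xnorm 0 χ₀ χ (1 / 2) s f ≤ K * √(1 + N) := by
  set G : ℝ × ℝ → ℝ := fun p => Real.exp (-(1 / 2) * p.1 ^ 2) * Real.exp (-(1 / 2) * p.2 ^ 2)
    with hG
  have hGi : Integrable G := integrable_gauss_real (by norm_num)
  set A : ℝ := 8 * 16 * (4 * Real.pi ^ 2) * (3840 * Real.exp (1 / 2)) with hA
  have hG0 : 0 ≤ ∫ p, G p := integral_nonneg fun p => by positivity
  refine ⟨2 * √(8 * (A * ∫ p, G p)) + 1, by positivity, fun N hN s f hf => ?_⟩
  have hsh := integral_comp_shear N (g := fun ξ => N ^ 2 + 2 * N * (ξ - N)) (by fun_prop) hGi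
  have hmain := Xnorm_le hχ s f
    (fun p => (1 + N) * A * G (p.1 - N, p.2 - (N ^ 2 + 2 * N * (p.1 - N))))
    (hsh.1.const_mul _) (fun p => ?_)
  · rw [integral_const_mul, hsh.2] at hmain
    refine hmain.trans ?_
    rw [show 8 * ((1 + N) * A * ∫ p, G p) = (8 * (A * ∫ p, G p)) * (1 + N) by ring,
      Real.sqrt_mul (by positivity)]
    nlinarith [Real.sqrt_nonneg (1 + N)]
  · obtain ⟨ξ, lam⟩ := p
    have hf' := hf ξ lam
    simp only [hG, ← sub_sub]
    set η := ξ - N with hη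
    set ρ := lam - N ^ 2 - 2 * N * η with hρ
    set w := 1 + η ^ 2 + ρ ^ 2 with hw
    have hz : |lam - disp 0 ξ| ≤ |ρ| + η ^ 2 := by
      have h1 := abs_disp_sub_le hN ξ
      rw [← hη] at h1
      calc |lam - disp 0 ξ| = |ρ - (disp 0 ξ - N ^ 2 - 2 * N * η)| := by rw [hρ]; ring_nf
        _ ≤ |ρ| + |disp 0 ξ - N ^ 2 - 2 * N * η| := abs_sub _ _
        _ ≤ _ := by gcongr
    have hz2 : 1 + |lam - disp 0 ξ| ≤ 2 * w := by
      have : |ρ| ≤ 1 + ρ ^ 2 := by nlinarith [sq_abs ρ, sq_nonneg (|ρ| - 1)]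
      rw [hw]
      nlinarith [sq_nonneg η, sq_nonneg ρ]
    have hw1 : 1 ≤ w := by rw [hw]; nlinarith [sq_nonneg η, sq_nonneg ρ]
    have hexp : w ^ 5 ≤ 3840 * Real.exp (w / 2) := by
      have := Real.pow_div_factorial_le_exp (x := w / 2) (by positivity) 5
      rw [div_le_iff₀ (by positivity)] at this
      norm_num [Nat.factorial] at this
      linarith
    have hw2 : w - 1 = η ^ 2 + ρ ^ 2 := by rw [hw]; ring
    rw [← hw2] at hf'
    calc _ ≤ (2 * w) ^ 3 * ((1 + N) * (16 * w ^ 2 * (4 * Real.pi ^ 2 *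
            Real.exp (-(w - 1))))) := by gcongr
      _ = (1 + N) * (8 * 16 * (4 * Real.pi ^ 2)) * (w ^ 5 * Real.exp (-(w - 1))) := by ring
      _ ≤ (1 + N) * (8 * 16 * (4 * Real.pi ^ 2)) *
            (3840 * Real.exp (w / 2) * Real.exp (-(w - 1))) := by gcongr
      _ = (1 + N) * A * Real.exp (-(w - 1) / 2) := by
          rw [hA, mul_assoc 3840, ← Real.exp_add,
            show w / 2 + -(w - 1) = 1 / 2 + -(w - 1) / 2 by ring, Real.exp_add]
          ring
      _ = _ := by
          rw [← Real.exp_add, hw2]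
          congr 2
          ring

/-- The three norms of the packet appearing on the right-hand side are all `O(√(1 + N))`. -/
lemma packet_norms {χ₀ χ : ℝ → ℝ} (hχ : DyadicCutoffs χ₀ χ) :
    ∃ K > 0, ∀ N : ℝ, 0 ≤ N →
      Xnorm 0 χ₀ χ (1 / 2) (1 / 2) (packet N) ≤ K * √(1 + N) ∧
      Ynorm 0 χ₀ χ (1 / 2) (-(1 / 2)) (1 / 2) (packet N) ≤ 2 * (K * √(1 + N)) := by
  obtain ⟨K, hK, h⟩ := Xnorm_le_of_localized hχ
  -- Peetre-type comparison of `1 + |ξ|` and `1 + N`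
  have hpe : ∀ N ξ ρ : ℝ, 0 ≤ N → 1 + |ξ| ≤ (1 + N) * (2 * (1 + (ξ - N) ^ 2 + ρ ^ 2)) ∧
      1 + N ≤ (1 + |ξ|) * (2 * (1 + (ξ - N) ^ 2 + ρ ^ 2)) := by
    intro N ξ ρ hN
    have h0 : 1 + |ξ - N| ≤ 2 * (1 + (ξ - N) ^ 2 + ρ ^ 2) := by
      nlinarith [sq_abs (ξ - N), sq_nonneg (|ξ - N| - 1), sq_nonneg ρ]
    have h1 : |ξ| ≤ N + |ξ - N| := by
      calc |ξ| = |N + (ξ - N)| := by ring_nf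
        _ ≤ |N| + |ξ - N| := abs_add_le _ _
        _ = _ := by rw [abs_of_nonneg hN]
    have h2 : N ≤ |ξ| + |ξ - N| := by
      calc N = ξ - (ξ - N) := by ring
        _ ≤ |ξ - (ξ - N)| := le_abs_self _
        _ ≤ _ := abs_sub _ _
    have h3 := abs_nonneg (ξ - N)
    have h4 := abs_nonneg ξ
    constructor
    · calc 1 + |ξ| ≤ (1 + N) * (1 + |ξ - N|) := by nlinarith
        _ ≤ _ := by gcongr
    · calc 1 + N ≤ (1 + |ξ|) * (1 + |ξ - N|) := by nlinarith
        _ ≤ _ := by gcongr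
  have e1 : (2 : ℝ) * (1 / 2) = 1 := by norm_num
  have e2 : (2 : ℝ) * (-(1 / 2)) = -1 := by norm_num
  refine ⟨K, hK, fun N hN => ⟨h N hN _ _ fun ξ lam => ?_, ?_⟩⟩
  · rw [norm_FT2_packet_sq, e1, Real.rpow_one, ← mul_assoc (1 + N)]
    refine mul_le_mul_of_nonneg_right ?_ (by positivity)
    have h1 := (hpe N ξ (lam - N ^ 2 - 2 * N * (ξ - N)) hN).1
    refine h1.trans ?_
    have h2 : 1 ≤ 1 + (ξ - N) ^ 2 + (lam - N ^ 2 - 2 * N * (ξ - N)) ^ 2 := by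
      nlinarith [sq_nonneg (ξ - N), sq_nonneg (lam - N ^ 2 - 2 * N * (ξ - N))]
    gcongr
    · norm_num
    · exact le_self_pow₀ h2 (by norm_num)
  · rw [Ynorm, two_mul]
    refine add_le_add (h N hN _ _ fun ξ lam => ?_) (h N hN _ _ fun ξ lam => ?_)
    · rw [norm_FT2_fst_packet_sq, norm_FT2_packet_sq, e2, Real.rpow_neg_one,
        ← mul_assoc (1 + N), ← mul_assoc]
      refine mul_le_mul_of_nonneg_right ?_ (by positivity)
      set ρ := lam - N ^ 2 - 2 * N * (ξ - N)
      have h1 := (hpe N ξ ρ hN).2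
      have hx : 0 < 1 + |ξ| := by positivity
      rw [inv_mul_eq_div, div_le_iff₀ hx]
      have h2 : (ξ - N - 2 * N * ρ) ^ 2 ≤
          8 * (1 + N) ^ 2 * (1 + (ξ - N) ^ 2 + ρ ^ 2) := by
        have h3 : (ξ - N - 2 * N * ρ) ^ 2 ≤ 2 * (ξ - N) ^ 2 + 8 * (N ^ 2 * ρ ^ 2) := by
          nlinarith [sq_nonneg (ξ - N + 2 * N * ρ)]
        have h4 : (ξ - N) ^ 2 ≤ (1 + N) ^ 2 * (ξ - N) ^ 2 :=
          le_mul_of_one_le_left (sq_nonneg _) (by nlinarith)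
        have h5 : N ^ 2 * ρ ^ 2 ≤ (1 + N) ^ 2 * ρ ^ 2 := by gcongr; linarith
        nlinarith [sq_nonneg (1 + N), mul_nonneg (sq_nonneg (1 + N)) (sq_nonneg (ξ - N))]
      calc _ ≤ 8 * (1 + N) ^ 2 * (1 + (ξ - N) ^ 2 + ρ ^ 2) := h2
        _ = (1 + N) * (8 * (1 + N) * (1 + (ξ - N) ^ 2 + ρ ^ 2)) := by ring
        _ ≤ ((1 + |ξ|) * (2 * (1 + (ξ - N) ^ 2 + ρ ^ 2))) *
            (8 * (1 + N) * (1 + (ξ - N) ^ 2 + ρ ^ 2)) := by gcongr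
        _ = _ := by ring
    · rw [norm_FT2_snd_packet_sq, norm_FT2_packet_sq, e1, Real.rpow_one,
        ← mul_assoc (1 + N), ← mul_assoc]
      refine mul_le_mul_of_nonneg_right ?_ (by positivity)
      set ρ := lam - N ^ 2 - 2 * N * (ξ - N)
      have h1 := (hpe N ξ ρ hN).1
      have h2 : ρ ^ 2 ≤ 1 + (ξ - N) ^ 2 + ρ ^ 2 := by nlinarith [sq_nonneg (ξ - N)]
      calc _ ≤ ((1 + N) * (2 * (1 + (ξ - N) ^ 2 + ρ ^ 2))) * (1 + (ξ - N) ^ 2 + ρ ^ 2) := by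
            gcongr
        _ = (1 + N) * (2 * (1 + (ξ - N) ^ 2 + ρ ^ 2) ^ 2) := by ring
        _ ≤ _ := by gcongr; norm_num

/-! ### Lower bound for the product -/

/-- The product `packet N * packet 0`, see `packet_mul_packet_zero`. -/
def packetProd (N : ℝ) : ℝ × ℝ → ℂ := gauss 1 N (2 * N ^ 2 + 1) N (N ^ 2)

lemma packet_mul_packet_zero (N : ℝ) (p : ℝ × ℝ) :
    packet N p * packet 0 p = packetProd N p := by
  unfold packet packetProd gauss gaussExponent
  rw [← Complex.exp_add]
  congr 1
  push_cast
  ring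

/-- The density `(1 + |ξ|) |ξ|² |f̂(ξ,λ)|²` of the `H^{1/2}`-type energy of `∂ₓ f` for
`f = packetProd N`. At fixed `ξ ≈ N` it is flat over a `λ`-range of length comparable to `N`
around the curve `λ = ω(ξ)`, so that all modulations `2^j ≤ N` contribute. -/
def prodDensity (N : ℝ) (p : ℝ × ℝ) : ℝ :=
  (1 + |p.1|) * (p.1 ^ 2 * (Real.pi ^ 2 / (N ^ 2 + 1) *
    Real.exp (-((p.1 - N) ^ 2 / 2 + (p.2 - (N ^ 2 + N * (p.1 - N))) ^ 2 / (2 * (N ^ 2 + 1))))))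

lemma prodDensity_nonneg (N : ℝ) (p : ℝ × ℝ) : 0 ≤ prodDensity N p := by
  unfold prodDensity; positivity

lemma continuous_prodDensity (N : ℝ) : Continuous (prodDensity N) := by
  unfold prodDensity; fun_prop

lemma weight_mul_norm_FT2_deriv (N : ℝ) (p : ℝ × ℝ) :
    (1 + |p.1|) ^ (2 * (1 / 2 : ℝ)) *
      ‖FT2 (fun p => deriv (fun x => packetProd N (x, p.2)) p.1) p.1 p.2‖ ^ 2 =
        prodDensity N p := by
  have hD : 0 < 1 * (2 * N ^ 2 + 1) - N ^ 2 := by nlinarith [sq_nonneg N]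
  unfold packetProd
  rw [norm_FT2_deriv_gauss_sq one_pos hD, norm_FT2_gauss_sq one_pos hD,
    show (2 : ℝ) * (1 / 2) = 1 by norm_num, Real.rpow_one, prodDensity,
    show 1 * (2 * N ^ 2 + 1) - N ^ 2 = N ^ 2 + 1 by ring]
  congr 5
  have : N ^ 2 + 1 ≠ 0 := by positivity
  field_simp
  ring

lemma integrable_prodDensity (N : ℝ) : Integrable (prodDensity N) := by
  obtain ⟨K, hK⟩ := one_add_pow_mul_exp_bounded (c := 1 / 8) (by norm_num) 3
  have hA : Integrable fun ξ : ℝ => (1 + |ξ|) * (ξ ^ 2 * (Real.pi ^ 2 / (N ^ 2 + 1) *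
      Real.exp (-((ξ - N) ^ 2 / 2)))) := by
    refine ((integrable_exp_neg_mul_sq (b := 1 / 8) (by norm_num)).const_mul
      (K * (Real.pi ^ 2 / (N ^ 2 + 1)) * Real.exp (N ^ 2 / 2))).mono'
      (by fun_prop : Continuous _).aestronglyMeasurable (Filter.Eventually.of_forall fun ξ => ?_)
    rw [Real.norm_of_nonneg (by positivity)]
    have h1 : Real.exp (-((ξ - N) ^ 2 / 2)) ≤
        Real.exp (-(1 / 8 * |ξ| ^ 2)) * Real.exp (-(1 / 8) * ξ ^ 2) * Real.exp (N ^ 2 / 2) := by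
      rw [← Real.exp_add, ← Real.exp_add, Real.exp_le_exp, sq_abs]
      nlinarith [sq_nonneg (ξ - 2 * N)]
    have h2 : (1 + |ξ|) * ξ ^ 2 ≤ (1 + |ξ|) ^ 3 := by
      rw [← sq_abs ξ]
      have := abs_nonneg ξ
      nlinarith [mul_nonneg this this, mul_nonneg (mul_nonneg this this) this]
    calc _ = ((1 + |ξ|) * ξ ^ 2) * (Real.pi ^ 2 / (N ^ 2 + 1)) *
          Real.exp (-((ξ - N) ^ 2 / 2)) := by ring
      _ ≤ (1 + |ξ|) ^ 3 * (Real.pi ^ 2 / (N ^ 2 + 1)) * (Real.exp (-(1 / 8 * |ξ| ^ 2)) *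
          Real.exp (-(1 / 8) * ξ ^ 2) * Real.exp (N ^ 2 / 2)) := by gcongr
      _ = ((1 + |ξ|) ^ 3 * Real.exp (-(1 / 8 * |ξ| ^ 2))) * (Real.pi ^ 2 / (N ^ 2 + 1)) *
          Real.exp (N ^ 2 / 2) * Real.exp (-(1 / 8) * ξ ^ 2) := by ring
      _ ≤ _ := by gcongr; exact hK _ (abs_nonneg ξ)
  have hB : Integrable fun σ : ℝ => Real.exp (-(1 / (2 * (N ^ 2 + 1))) * σ ^ 2) :=
    integrable_exp_neg_mul_sq (by positivity)
  have hAB := hA.mul_prod hB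
  rw [← Measure.volume_eq_prod] at hAB
  have h := (integral_comp_shear 0 (g := fun ξ => N ^ 2 + N * (ξ - N)) (by fun_prop) hAB).1
  refine h.congr (Filter.Eventually.of_forall fun p => ?_)
  simp only [sub_zero, prodDensity]
  rw [neg_add, Real.exp_add, show -(1 / (2 * (N ^ 2 + 1))) * (p.2 - (N ^ 2 + N * (p.1 - N))) ^ 2 =
    -((p.2 - (N ^ 2 + N * (p.1 - N))) ^ 2 / (2 * (N ^ 2 + 1))) by ring]
  ring

lemma integrable_chi {χ₀ χ : ℝ → ℝ} (hχ : DyadicCutoffs χ₀ χ) : Integrable χ := by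
  refine hχ.smooth1.continuous.integrable_of_hasCompactSupport ?_
  refine HasCompactSupport.intro (isCompact_Icc (a := (-2 : ℝ)) (b := 2)) fun z hz => ?_
  by_contra h
  have := abs_lt.1 (hχ.supp1 z h).2
  exact hz ⟨by linarith, by linarith⟩

/-- The partition of unity forces `χ` not to vanish identically: at `z = 3` the cutoff `χ₀` is
zero. -/
lemma integral_chi_pos {χ₀ χ : ℝ → ℝ} (hχ : DyadicCutoffs χ₀ χ) : 0 < ∫ z, χ z := by
  obtain ⟨w, hw⟩ : ∃ w, χ w ≠ 0 := by
    by_contra! h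
    have h1 := hχ.partition 3
    have h2 : ∀ j, chiJ χ₀ χ j 3 = 0 := by
      intro j
      rcases eq_or_ne j 0 with rfl | hj
      · rw [chiJ_zero]
        exact hχ.supp0 3 (by norm_num)
      · rw [chiJ_pos _ _ hj, h]
    simp [h2] at h1
  exact integral_pos_of_integrable_nonneg_nonzero hχ.smooth1.continuous (integrable_chi hχ)
    (fun z => (hχ.mem1 z).1) hw

lemma integral_chiJ {χ₀ χ : ℝ → ℝ} (hχ : DyadicCutoffs χ₀ χ) {j : ℕ} (hj : j ≠ 0) :
    Integrable (chiJ χ₀ χ j) ∧ ∫ z, chiJ χ₀ χ j z = 2 ^ j * ∫ z, χ z := by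
  rw [funext (chiJ_pos χ₀ χ hj)]
  refine ⟨(integrable_chi hχ).comp_mul_left' (by positivity), ?_⟩
  rw [Measure.integral_comp_mul_left]
  simp

lemma prodDensity_ge {χ₀ χ : ℝ → ℝ} (hχ : DyadicCutoffs χ₀ χ) {N : ℝ} (hN : 2 ≤ N) {j : ℕ}
    (hj : j ≠ 0) (hjN : 2 ^ j ≤ N) {p : ℝ × ℝ} (hp : p.1 ∈ Set.Icc (N - 1) (N + 1))
    (hc : chiJ χ₀ χ j (p.2 - disp 0 p.1) ≠ 0) :
    N / 8 * Real.exp (-9) ≤ prodDensity N p := by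
  obtain ⟨ξ, lam⟩ := p
  obtain ⟨h1, h2⟩ := hp
  simp only at h1 h2 hc
  have hz := (abs_of_chiJ_ne_zero hχ hj hc).2
  have hd := abs_disp_sub_le (by linarith : 0 ≤ N) ξ
  have hη : |ξ - N| ≤ 1 := abs_le.2 ⟨by linarith, by linarith⟩
  have hη2 : (ξ - N) ^ 2 ≤ 1 := by rw [← sq_abs]; exact pow_le_one₀ (abs_nonneg _) hη
  have hσ : |lam - (N ^ 2 + N * (ξ - N))| ≤ 4 * N := by
    rw [abs_le] at hz hd hη ⊢
    constructor <;> nlinarith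
  have hσ2 : (lam - (N ^ 2 + N * (ξ - N))) ^ 2 ≤ 16 * N ^ 2 := by
    rw [← sq_abs]
    calc _ ≤ (4 * N) ^ 2 := by gcongr
      _ = _ := by ring
  have hexp : Real.exp (-9) ≤ Real.exp (-((ξ - N) ^ 2 / 2 +
      (lam - (N ^ 2 + N * (ξ - N))) ^ 2 / (2 * (N ^ 2 + 1)))) := by
    rw [Real.exp_le_exp, neg_le_neg_iff]
    have : (lam - (N ^ 2 + N * (ξ - N))) ^ 2 / (2 * (N ^ 2 + 1)) ≤ 8 := by
      rw [div_le_iff₀ (by positivity)]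
      linarith
    linarith
  have hfac : 1 / 8 ≤ ξ ^ 2 * (Real.pi ^ 2 / (N ^ 2 + 1)) := by
    have hpi : 1 ≤ Real.pi ^ 2 := one_le_pow₀ (by linarith [Real.pi_gt_three])
    have hξ : (N ^ 2 + 1) / 8 ≤ ξ ^ 2 := by nlinarith
    rw [mul_div_assoc', le_div_iff₀ (by positivity)]
    nlinarith [mul_le_mul hξ hpi zero_le_one (sq_nonneg ξ)]
  have hw : N ≤ 1 + |ξ| := by linarith [le_abs_self ξ]
  calc N / 8 * Real.exp (-9) = N * (1 / 8 * Real.exp (-9)) := by ring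
    _ ≤ (1 + |ξ|) * ((ξ ^ 2 * (Real.pi ^ 2 / (N ^ 2 + 1))) * Real.exp (-((ξ - N) ^ 2 / 2 +
      (lam - (N ^ 2 + N * (ξ - N))) ^ 2 / (2 * (N ^ 2 + 1))))) := by gcongr
    _ = _ := by rw [prodDensity]; ring

lemma integrable_chiJ_mul_prodDensity {χ₀ χ : ℝ → ℝ} (hχ : DyadicCutoffs χ₀ χ) (N : ℝ) (j : ℕ) :
    Integrable fun p : ℝ × ℝ => chiJ χ₀ χ j (p.2 - disp 0 p.1) * prodDensity N p := by
  have hcont : Continuous fun p : ℝ × ℝ => chiJ χ₀ χ j (p.2 - disp 0 p.1) :=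
    (continuous_chiJ hχ j).comp
      (continuous_snd.sub (continuous_disp_zero.comp continuous_fst))
  refine (integrable_prodDensity N).mono'
    (hcont.mul (continuous_prodDensity N)).aestronglyMeasurable
    (Filter.Eventually.of_forall fun p => ?_)
  have h := chiJ_mem hχ j (p.2 - disp 0 p.1)
  rw [Real.norm_of_nonneg (mul_nonneg h.1 (prodDensity_nonneg N p))]
  exact mul_le_of_le_one_left (prodDensity_nonneg N p) h.2

/-- The energy of `∂ₓ(packetProd N)` at modulation `2^j`, for each `2 ≤ 2^j ≤ N`. -/
lemma integral_chiJ_mul_prodDensity_ge {χ₀ χ : ℝ → ℝ} (hχ : DyadicCutoffs χ₀ χ) {N : ℝ}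
    (hN : 2 ≤ N) {j : ℕ} (hj : j ≠ 0) (hjN : 2 ^ j ≤ N) :
    2 ^ j * ((Real.exp (-9) / 4 * ∫ z, χ z) * N) ≤
      ∫ p : ℝ × ℝ, chiJ χ₀ χ j (p.2 - disp 0 p.1) * prodDensity N p := by
  set I : ℝ → ℝ := (Set.Icc (N - 1) (N + 1)).indicator fun _ => N / 8 * Real.exp (-9) with hI
  have hIi : Integrable I :=
    (integrable_indicator_iff measurableSet_Icc).2 continuous_const.integrableOn_Icc
  have hIint : ∫ ξ, I ξ = N / 4 * Real.exp (-9) := by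
    rw [hI, integral_indicator measurableSet_Icc, setIntegral_const, Real.volume_real_Icc_of_le
      (by linarith), smul_eq_mul]
    ring
  obtain ⟨hχi, hχint⟩ := integral_chiJ hχ hj
  have hprod := hIi.mul_prod hχi
  rw [← Measure.volume_eq_prod] at hprod
  obtain ⟨hs1, hs2⟩ := integral_comp_shear 0 continuous_disp_zero hprod
  rw [Measure.volume_eq_prod, integral_prod_mul, ← Measure.volume_eq_prod, hIint, hχint] at hs2
  calc _ = N / 4 * Real.exp (-9) * (2 ^ j * ∫ z, χ z) := by ring
    _ = _ := hs2.symm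
    _ ≤ _ := by
      refine integral_mono hs1 (integrable_chiJ_mul_prodDensity hχ N j) fun p => ?_
      simp only [sub_zero]
      have h0 := (chiJ_mem hχ j (p.2 - disp 0 p.1)).1
      by_cases hp : p.1 ∈ Set.Icc (N - 1) (N + 1)
      · rw [hI, Set.indicator_of_mem hp, mul_comm]
        by_cases hc : chiJ χ₀ χ j (p.2 - disp 0 p.1) = 0
        · simp [hc]
        · exact mul_le_mul_of_nonneg_left (prodDensity_ge hχ hN hj hjN hp hc) h0
      · rw [hI, Set.indicator_of_notMem hp, zero_mul]
        exact mul_nonneg h0 (prodDensity_nonneg N p)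

/-- Each of the `J` modulations `2, 4, …, 2^J` contributes a multiple of `√(2^J)` to the
left-hand norm, which is therefore at least a multiple of `J √(2^J)`. -/
lemma Xnorm_packetProd_ge {χ₀ χ : ℝ → ℝ} (hχ : DyadicCutoffs χ₀ χ) {J : ℕ} (hJ : 1 ≤ J) :
    J * √((Real.exp (-9) / 4 * ∫ z, χ z) * 2 ^ J) ≤ Xnorm 0 χ₀ χ (-(1 / 2)) (1 / 2)
      (fun p : ℝ × ℝ => deriv (fun x => packetProd (2 ^ J) (x, p.2)) p.1) := by
  set N : ℝ := 2 ^ J with hNdef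
  have hN : 2 ≤ N := by
    calc (2 : ℝ) = 2 ^ 1 := by norm_num
      _ ≤ 2 ^ J := pow_le_pow_right₀ (by norm_num) hJ
  rw [Xnorm]
  simp_rw [mul_assoc (chiJ _ _ _ _), weight_mul_norm_FT2_deriv]
  set E : ℕ → ℝ := fun j => ∫ p : ℝ × ℝ, chiJ χ₀ χ j (p.2 - disp 0 p.1) * prodDensity N p with hE
  have hterm : ∀ j : ℕ, (2 : ℝ) ^ ((j : ℝ) * (-(1 / 2))) * (E j) ^ ((1 : ℝ) / 2) =
      √(((2 : ℝ) ^ j)⁻¹ * E j) := by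
    intro j
    rw [← Real.sqrt_eq_rpow, mul_neg, Real.rpow_neg (by norm_num), Real.rpow_mul (by norm_num),
      ← Real.sqrt_eq_rpow, Real.rpow_natCast, Real.sqrt_mul (by positivity), Real.sqrt_inv]
  have hEle : ∀ j, E j ≤ ∫ p, prodDensity N p := fun j =>
    integral_mono (integrable_chiJ_mul_prodDensity hχ N j) (integrable_prodDensity N) fun p =>
      mul_le_of_le_one_left (prodDensity_nonneg N p) (chiJ_mem hχ j _).2
  have hsum : Summable fun j => √(((2 : ℝ) ^ j)⁻¹ * E j) := by
    have hr : Summable fun j : ℕ => (√2⁻¹) ^ j * √(∫ p, prodDensity N p) :=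
      (summable_geometric_of_lt_one (Real.sqrt_nonneg _) (by
        rw [Real.sqrt_lt' one_pos]; norm_num)).mul_right _
    refine Summable.of_nonneg_of_le (fun j => Real.sqrt_nonneg _) (fun j => ?_) hr
    rw [Real.sqrt_mul (by positivity), ← inv_pow]
    have : √((2⁻¹ : ℝ) ^ j) = (√2⁻¹) ^ j := by
      rw [Real.sqrt_eq_iff_mul_self_eq (by positivity) (by positivity), ← mul_pow,
        Real.mul_self_sqrt (by norm_num)]
    rw [this]
    gcongr
    exact hEle j
  have hlow : ∀ j ∈ Finset.Icc 1 J,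
      √((Real.exp (-9) / 4 * ∫ z, χ z) * N) ≤ √(((2 : ℝ) ^ j)⁻¹ * E j) := by
    intro j hj
    rw [Finset.mem_Icc] at hj
    refine Real.sqrt_le_sqrt ?_
    rw [inv_mul_eq_div, le_div_iff₀' (by positivity)]
    exact integral_chiJ_mul_prodDensity_ge hχ hN (by omega)
      (pow_le_pow_right₀ (by norm_num) hj.2)
  calc _ = ∑ j ∈ Finset.Icc 1 J, √((Real.exp (-9) / 4 * ∫ z, χ z) * N) := by simp
    _ ≤ ∑ j ∈ Finset.Icc 1 J, √(((2 : ℝ) ^ j)⁻¹ * E j) := Finset.sum_le_sum hlow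
    _ ≤ ∑' j, √(((2 : ℝ) ^ j)⁻¹ * E j) := hsum.sum_le_tsum _ fun j _ => Real.sqrt_nonneg _
    _ = _ := (tsum_congr hterm).symm

theorem statement13 (χ₀ χ : ℝ → ℝ) (hχ : DyadicCutoffs χ₀ χ) :
    ¬ ∃ C > 0, ∀ u₁ u₂ : SchwartzMap (ℝ × ℝ) ℂ,
      Xnorm 0 χ₀ χ (-(1 / 2)) (1 / 2)
          (fun p : ℝ × ℝ => deriv (fun x => u₁ (x, p.2) * u₂ (x, p.2)) p.1) ≤
        C * Xnorm 0 χ₀ χ (1 / 2) (1 / 2) (fun p => u₁ p) *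
            (Xnorm 0 χ₀ χ (1 / 2) (1 / 2) (fun p => u₂ p) +
              Xnorm 0 χ₀ χ (1 / 2) (1 / 2) (fun p => u₂ p) ^ ((1 : ℝ) / 2) *
                Ynorm 0 χ₀ χ (1 / 2) (-(1 / 2)) (1 / 2) (fun p => u₂ p) ^ ((1 : ℝ) / 2)) +
          C * Xnorm 0 χ₀ χ (1 / 2) (1 / 2) (fun p => u₂ p) *
            (Xnorm 0 χ₀ χ (1 / 2) (1 / 2) (fun p => u₁ p) +
              Xnorm 0 χ₀ χ (1 / 2) (1 / 2) (fun p => u₁ p) ^ ((1 : ℝ) / 2) *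
                Ynorm 0 χ₀ χ (1 / 2) (-(1 / 2)) (1 / 2) (fun p => u₁ p) ^ ((1 : ℝ) / 2)) := by
  rintro ⟨C, hC, h⟩
  obtain ⟨K, hK, hpk⟩ := packet_norms hχ
  set c : ℝ := Real.exp (-9) / 4 * ∫ z, χ z with hc
  have hc0 : 0 < c := mul_pos (by positivity) (integral_chi_pos hχ)
  obtain ⟨J, hJ⟩ := exists_nat_gt (12 * C * K ^ 2 / √c)
  have hJ0 : (0 : ℝ) < J := lt_of_le_of_lt (by positivity) hJ
  have hJ1 : 1 ≤ J := by exact_mod_cast hJ0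
  rw [div_lt_iff₀ (Real.sqrt_pos.2 hc0)] at hJ
  set N : ℝ := 2 ^ J with hN
  have hN1 : 1 ≤ N := one_le_pow₀ (by norm_num)
  have hlow := Xnorm_packetProd_ge hχ hJ1
  have hest := h (gaussSchwartz (1 / 2) N (2 * N ^ 2 + 1 / 2) N (N ^ 2) (by norm_num)
    (packet_det N)) (gaussSchwartz (1 / 2) 0 (2 * 0 ^ 2 + 1 / 2) 0 (0 ^ 2) (by norm_num)
    (packet_det 0))
  change Xnorm 0 χ₀ χ (-(1 / 2)) (1 / 2)
      (fun p : ℝ × ℝ => deriv (fun x => packet N (x, p.2) * packet 0 (x, p.2)) p.1) ≤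
    C * Xnorm 0 χ₀ χ (1 / 2) (1 / 2) (packet N) *
      (Xnorm 0 χ₀ χ (1 / 2) (1 / 2) (packet 0) +
        Xnorm 0 χ₀ χ (1 / 2) (1 / 2) (packet 0) ^ ((1 : ℝ) / 2) *
          Ynorm 0 χ₀ χ (1 / 2) (-(1 / 2)) (1 / 2) (packet 0) ^ ((1 : ℝ) / 2)) +
    C * Xnorm 0 χ₀ χ (1 / 2) (1 / 2) (packet 0) *
      (Xnorm 0 χ₀ χ (1 / 2) (1 / 2) (packet N) +
        Xnorm 0 χ₀ χ (1 / 2) (1 / 2) (packet N) ^ ((1 : ℝ) / 2) *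
          Ynorm 0 χ₀ χ (1 / 2) (-(1 / 2)) (1 / 2) (packet N) ^ ((1 : ℝ) / 2)) at hest
  simp_rw [packet_mul_packet_zero] at hest
  obtain ⟨hX, hY⟩ := hpk N (by linarith)
  obtain ⟨hX0, hY0⟩ := hpk 0 le_rfl
  rw [add_zero, Real.sqrt_one, mul_one] at hX0 hY0
  have hXn := Xnorm_nonneg hχ (1 / 2) (1 / 2) (packet N)
  have hX0n := Xnorm_nonneg hχ (1 / 2) (1 / 2) (packet 0)
  have hYn : ∀ M, 0 ≤ Ynorm 0 χ₀ χ (1 / 2) (-(1 / 2)) (1 / 2) (packet M) := fun M =>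
    add_nonneg (Xnorm_nonneg hχ _ _ _) (Xnorm_nonneg hχ _ _ _)
  have hgeo : ∀ {X Y B : ℝ}, 0 ≤ X → 0 ≤ Y → 0 ≤ B → X ≤ B → Y ≤ 2 * B →
      X + X ^ ((1 : ℝ) / 2) * Y ^ ((1 : ℝ) / 2) ≤ 3 * B := by
    intro X Y B hX hY hB hXB hYB
    rw [← Real.mul_rpow hX hY, ← Real.sqrt_eq_rpow]
    have : √(X * Y) ≤ 2 * B := by
      rw [Real.sqrt_le_left (by positivity)]
      calc X * Y ≤ B * (2 * B) := by gcongr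
        _ ≤ _ := by nlinarith [sq_nonneg B]
    linarith
  have g0 := hgeo hX0n (hYn 0) hK.le hX0 hY0
  have gN := hgeo hXn (hYn N) (by positivity) hX hY
  have hup : J * √(c * N) ≤ 6 * C * K ^ 2 * √(1 + N) := by
    refine (hlow.trans hest).trans ?_
    calc _ ≤ C * (K * √(1 + N)) * (3 * K) + C * K * (3 * (K * √(1 + N))) := by
          have p0 := Real.rpow_nonneg hX0n (1 / 2)
          have q0 := Real.rpow_nonneg (hYn 0) (1 / 2)
          have pN := Real.rpow_nonneg hXn (1 / 2)
          have qN := Real.rpow_nonneg (hYn N) (1 / 2)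
          gcongr
      _ = _ := by ring
  have hsq : √(1 + N) ≤ 2 * √N := by
    rw [Real.sqrt_le_left (by positivity), mul_pow, Real.sq_sqrt (by linarith)]
    linarith
  have hNs : 0 < √N := Real.sqrt_pos.2 (by linarith)
  rw [Real.sqrt_mul hc0.le] at hup
  have hfin : (J * √c) * √N ≤ (12 * C * K ^ 2) * √N := by
    calc (J * √c) * √N = J * (√c * √N) := by ring
      _ ≤ 6 * C * K ^ 2 * √(1 + N) := hup
      _ ≤ 6 * C * K ^ 2 * (2 * √N) := by gcongr
      _ = _ := by ring
  exact absurd (le_of_mul_le_mul_right hfin hNs) (not_le.2 hJ)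
end
end

section
/- Let a ∈ (0,1), s ∈ ℝ, and b ∈ (1/2,1). There exists a constant C > 0, independent of δ, such that for every δ ∈ (0,1) and every Schwartz function f on ℝ² one has ‖ψ(t/δ) f‖_{X̃^b_s} ≤ C δ^{1/2 − b} ‖f‖_{X̃^b_s}, where ψ(t/δ) f denotes the function (x,t) ↦ ψ(t/δ) f(x,t). -/
/-!
Multiplying `f` by `ψ(t/δ)` turns its Fourier transform at `(ξ, λ)` into the average
`∫ ψ̂(ν) f̂(ξ, λ + 2πν/δ) dν` (`FT2_cutoff_mul`; here
`ψ̂` has the kernel `e^{-2πitν}`), which leaves `ξ` untouched. So it is enough to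
bound such averages in `λ`, for each fixed `ξ`, in `L²` with the weight `(1 + |λ - ω(ξ)|)^{2b}`;
after the translation `τ = λ - ω(ξ)` the weight is `(1 + |τ|)^{2b}` and `ω` disappears.

With `c = 2π/δ` and `b ≤ 1` one has `(1 + |τ|)^b ≤ (1 + |τ + cν|)^b + (c|ν|)^b`. The first term
gives a contribution bounded by `‖ψ̂‖_{L¹}`, uniformly in `δ`. For the second, Cauchy–Schwarz and
`∫ (1 + |τ|)^{-2b} dτ < ∞`, valid because `b > 1/2`, give a bound by `c^{b - 1/2}`, hence by a
constant times `δ^{1/2 - b}` (`weighted_convolution_bound`). Since `δ < 1` this also dominates the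
first term.

The fibre estimates are integrated in `ξ` by Tonelli with `ℝ≥0∞`-valued integrals. Returning to
Bochner integrals requires the right-hand integral to converge, which is
`integrable_weight_mul_sq`.
-/

open MeasureTheory Complex

noncomputable section

open scoped ENNReal SchwartzMap FourierTransform

/-- Cauchy–Schwarz in squared form, without any integrability assumption. -/
lemma lintegral_mul_sq_le {f g : ℝ → ℝ≥0∞} (hf : Measurable f) (hg : Measurable g) :
    (∫⁻ x, f x * g x) ^ 2 ≤ (∫⁻ x, f x ^ 2) * ∫⁻ x, g x ^ 2 := by
  have h := ENNReal.lintegral_mul_le_Lp_mul_Lq volume Real.HolderConjugate.two_two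
    hf.aemeasurable hg.aemeasurable
  simp only [Pi.mul_apply, ENNReal.rpow_ofNat] at h
  have hs : ∀ x : ℝ≥0∞, (x ^ (1 / 2 : ℝ)) ^ 2 = x := fun x => by
    rw [← ENNReal.rpow_ofNat, ← ENNReal.rpow_mul]; norm_num
  calc _ ≤ _ := pow_le_pow_left' h 2
    _ = _ := by rw [mul_pow, hs, hs]

lemma lintegral_comp_add_mul {h : ℝ → ℝ≥0∞} (hh : Measurable h) {c : ℝ} (hc : 0 < c) (τ : ℝ) :
    ∫⁻ ν, h (τ + c * ν) = ENNReal.ofReal c⁻¹ * ∫⁻ x, h x := by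
  have h1 : ∫⁻ ν, h (τ + c * ν) = ∫⁻ y, h (τ + y) ∂(Measure.map (c * ·) volume) := by
    rw [lintegral_map (by fun_prop) (by fun_prop)]
  rw [h1, Real.map_volume_mul_left hc.ne', lintegral_smul_measure,
    lintegral_add_left_eq_self, abs_of_pos (inv_pos.2 hc), smul_eq_mul]

/-- The one-dimensional estimate behind the theorem, for an average of translates `g(τ + cν)`
against a kernel `κ(ν)`. The weight on `τ` is split into the weight on `τ + cν` plus `(c|ν|)^b`.
The first part is handled by Young's inequality `L¹ * L² ⊆ L²`, the second one by `L² * L¹ ⊆ L²`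
and the bound of `‖g‖_{L¹}` by its weighted `L²` norm. The power of `c` is `2b` from `(c|ν|)^b`
and `-1` from the dilation `ν ↦ cν`. -/
lemma weighted_convolution_bound {κ g : ℝ → ℝ≥0∞} (hκ : Measurable κ) (hg : Measurable g)
    {b c : ℝ} (hb0 : 0 < b) (hb1 : b ≤ 1) (hc : 0 < c) :
    ∫⁻ τ, (ENNReal.ofReal ((1 + |τ|) ^ b) * ∫⁻ ν, κ ν * g (τ + c * ν)) ^ 2 ≤
      2 * ((∫⁻ ν, κ ν) ^ 2 + ENNReal.ofReal (c ^ (2 * b - 1)) *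
        ((∫⁻ ν, (κ ν * ENNReal.ofReal (|ν| ^ b)) ^ 2) *
          ∫⁻ τ, ENNReal.ofReal ((1 + |τ|) ^ (-b)) ^ 2)) *
        ∫⁻ τ, (ENNReal.ofReal ((1 + |τ|) ^ b) * g τ) ^ 2 := by
  set W : ℝ → ℝ≥0∞ := fun τ => ENNReal.ofReal ((1 + |τ|) ^ b) with hW
  set V : ℝ → ℝ≥0∞ := fun τ => ENNReal.ofReal ((1 + |τ|) ^ (-b)) with hV
  set m : ℝ → ℝ≥0∞ := fun ν => κ ν * ENNReal.ofReal (|ν| ^ b) with hm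
  set h : ℝ → ℝ≥0∞ := fun τ => W τ * g τ with hh
  have mW : Measurable W := by fun_prop
  have mV : Measurable V := by fun_prop
  have mm : Measurable m := by fun_prop
  have mh : Measurable h := by fun_prop
  set H := ∫⁻ τ, h τ ^ 2 with hH
  have hVW : ∀ τ, g τ = V τ * h τ := fun τ => by
    have : V τ * W τ = 1 := by
      have hp : 0 < 1 + |τ| := by positivity
      simp only [hV, hW]
      rw [← ENNReal.ofReal_mul (by positivity), ← Real.rpow_add hp]; simp
    rw [hh, ← mul_assoc, this, one_mul]
  -- the weight is subadditive since `b ≤ 1`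
  have hsub : ∀ τ ν, W τ ≤ W (τ + c * ν) + ENNReal.ofReal (c ^ b) * ENNReal.ofReal (|ν| ^ b) := by
    intro τ ν
    simp only [hW]
    rw [← ENNReal.ofReal_mul (by positivity), ← ENNReal.ofReal_add (by positivity) (by positivity),
      ← Real.mul_rpow hc.le (abs_nonneg _)]
    apply ENNReal.ofReal_le_ofReal
    refine le_trans ?_ (Real.rpow_add_le_add_rpow (by positivity) (by positivity) hb0.le hb1)
    apply Real.rpow_le_rpow (by positivity) _ hb0.le
    have : |τ| ≤ |τ + c * ν| + |c * ν| := by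
      simpa using abs_sub (τ + c * ν) (c * ν)
    rw [abs_mul c ν, abs_of_pos hc] at this
    linarith
  have key : ∀ τ, W τ * (∫⁻ ν, κ ν * g (τ + c * ν)) ≤
      (∫⁻ ν, κ ν * h (τ + c * ν)) + ENNReal.ofReal (c ^ b) * ∫⁻ ν, m ν * g (τ + c * ν) := by
    intro τ
    rw [← lintegral_const_mul _ (by fun_prop), ← lintegral_const_mul _ (by fun_prop),
      ← lintegral_add_left (by fun_prop)]
    apply lintegral_mono
    intro ν
    calc W τ * (κ ν * g (τ + c * ν)) ≤
        (W (τ + c * ν) + ENNReal.ofReal (c ^ b) * ENNReal.ofReal (|ν| ^ b)) *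
          (κ ν * g (τ + c * ν)) := by gcongr; exact hsub τ ν
      _ = _ := by simp only [hh, hm]; ring
  -- Cauchy–Schwarz for `κ * h = κ^(1/2) * (κ^(1/2) * h)`
  have b1 : ∀ τ, (∫⁻ ν, κ ν * h (τ + c * ν)) ^ 2 ≤
      (∫⁻ ν, κ ν) * ∫⁻ ν, κ ν * h (τ + c * ν) ^ 2 := by
    intro τ
    have hs : ∀ x : ℝ≥0∞, (x ^ (1 / 2 : ℝ)) ^ 2 = x := fun x => by
      rw [← ENNReal.rpow_ofNat, ← ENNReal.rpow_mul]; norm_num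
    have := lintegral_mul_sq_le (f := fun ν => κ ν ^ (1 / 2 : ℝ))
      (g := fun ν => κ ν ^ (1 / 2 : ℝ) * h (τ + c * ν)) (by fun_prop) (by fun_prop)
    simp only [mul_pow, hs, ← mul_assoc, ← sq] at this
    exact this
  -- Cauchy–Schwarz for `m * g = (m * V) * h`
  have b2 : ∀ τ, (∫⁻ ν, m ν * g (τ + c * ν)) ^ 2 ≤
      (∫⁻ ν, m ν ^ 2 * V (τ + c * ν) ^ 2) * (ENNReal.ofReal c⁻¹ * H) := by
    intro τ
    have := lintegral_mul_sq_le (f := fun ν => m ν * V (τ + c * ν))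
      (g := fun ν => h (τ + c * ν)) (by fun_prop) (by fun_prop)
    rw [lintegral_comp_add_mul (h := fun x => h x ^ 2) (by fun_prop) hc] at this
    simpa only [mul_pow, mul_assoc, ← hVW] using this
  -- Tonelli and translation invariance
  have tonelli : ∀ u v : ℝ → ℝ≥0∞, Measurable u → Measurable v →
      ∫⁻ τ, ∫⁻ ν, u ν * v (τ + c * ν) = (∫⁻ ν, u ν) * ∫⁻ τ, v τ := by
    intro u v hu hv
    rw [lintegral_lintegral_swap (by fun_prop)]
    rw [← lintegral_mul_const _ hu]
    congr 1; ext ν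
    rw [lintegral_const_mul _ (by fun_prop), lintegral_add_right_eq_self]
  have hcc : ENNReal.ofReal (c ^ b) ^ 2 * ENNReal.ofReal c⁻¹ = ENNReal.ofReal (c ^ (2 * b - 1)) := by
    rw [← ENNReal.ofReal_pow (by positivity), ← ENNReal.ofReal_mul (by positivity)]
    congr 1
    rw [Real.rpow_sub hc, mul_comm 2 b, Real.rpow_mul hc.le]
    simp [div_eq_mul_inv]
  have two : ∀ x y : ℝ≥0∞, (x + y) ^ 2 ≤ 2 * (x ^ 2 + y ^ 2) := fun x y => by
    have := ENNReal.rpow_add_le_mul_rpow_add_rpow x y (p := 2) (by norm_num)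
    norm_num at this
    exact_mod_cast this
  calc _ ≤ ∫⁻ τ, 2 * ((∫⁻ ν, κ ν) * (∫⁻ ν, κ ν * h (τ + c * ν) ^ 2) +
        ENNReal.ofReal (c ^ b) ^ 2 *
          ((∫⁻ ν, m ν ^ 2 * V (τ + c * ν) ^ 2) * (ENNReal.ofReal c⁻¹ * H))) := by
        apply lintegral_mono
        intro τ
        refine (pow_le_pow_left' (key τ) 2).trans ((two _ _).trans ?_)
        rw [mul_pow]
        exact mul_le_mul' le_rfl (add_le_add (b1 τ) (mul_le_mul' le_rfl (b2 τ)))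
    _ = 2 * ((∫⁻ ν, κ ν) * ((∫⁻ ν, κ ν) * H) +
        ENNReal.ofReal (c ^ b) ^ 2 *
          (((∫⁻ ν, m ν ^ 2) * ∫⁻ τ, V τ ^ 2) * (ENNReal.ofReal c⁻¹ * H))) := by
        rw [lintegral_const_mul _ (by fun_prop), lintegral_add_left (by fun_prop),
          lintegral_const_mul _ (by fun_prop), lintegral_const_mul _ (by fun_prop),
          lintegral_mul_const _ (by fun_prop),
          tonelli κ (fun x => h x ^ 2) hκ (by fun_prop),
          tonelli (fun x => m x ^ 2) (fun x => V x ^ 2) (by fun_prop) (by fun_prop)]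
    _ = _ := by rw [← hcc]; ring

/-- The space-time Fourier transform of a Schwartz function is Schwartz. As `ℝ × ℝ` carries the
sup norm, the Fourier transform of Schwartz functions is applied on the inner product space `ℂ`,
and the normalisation is corrected by the dilation by `-1/(2π)`. -/
lemma exists_schwartz_FT2 (f : 𝓢(ℝ × ℝ, ℂ)) :
    ∃ G : 𝓢(ℝ × ℝ, ℂ), ∀ p : ℝ × ℝ, FT2 f p.1 p.2 = G p := by
  let F : 𝓢(ℂ, ℂ) := SchwartzMap.compCLMOfContinuousLinearEquiv ℂ Complex.equivRealProdCLM f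
  let e : (ℝ × ℝ) ≃L[ℝ] ℂ := Complex.equivRealProdCLM.symm.trans
    (ContinuousLinearEquiv.smulLeft (Units.mk0 (-(2 * Real.pi)⁻¹ : ℝ) (by
      have := Real.pi_pos; simp [this.ne'])))
  refine ⟨SchwartzMap.compCLMOfContinuousLinearEquiv ℂ e (𝓕 F), fun p => ?_⟩
  have he : e p = (-(2 * Real.pi)⁻¹ : ℝ) • (Complex.equivRealProdCLM.symm p) := rfl
  rw [SchwartzMap.compCLMOfContinuousLinearEquiv_apply, Function.comp_apply,
    SchwartzMap.fourier_coe, Real.fourier_eq', he, FT2,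
    ← Complex.volume_preserving_equiv_real_prod.integral_comp
      Complex.measurableEquivRealProd.measurableEmbedding]
  congr 1; ext z
  have : F z = f (z.re, z.im) := rfl
  rw [smul_eq_mul, this]
  have : Complex.measurableEquivRealProd z = (z.re, z.im) := rfl
  rw [this]
  congr 2
  rw [inner_smul_right, Complex.inner]
  have hre : (Complex.equivRealProdCLM.symm p).re = p.1 := rfl
  have him : (Complex.equivRealProdCLM.symm p).im = p.2 := rfl
  simp only [Complex.mul_re, Complex.conj_re, Complex.conj_im, hre, him]
  push_cast
  have := Real.pi_ne_zero
  field_simp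
  ring

/-- Multiplication by `Ψ(t/δ)` averages the space-time Fourier transform over translates in the
time frequency: write `Ψ(t/δ)` by Fourier inversion and apply Fubini. -/
lemma FT2_cutoff_mul (Ψ : 𝓢(ℝ, ℂ)) (f : 𝓢(ℝ × ℝ, ℂ)) (δ ξ lam : ℝ) :
    FT2 (fun p => Ψ (p.2 / δ) * f p) ξ lam =
      ∫ ν : ℝ, (𝓕 Ψ) ν * FT2 f ξ (lam + 2 * Real.pi / δ * ν) := by
  have hinv : ∀ t : ℝ, Ψ t = ∫ ν : ℝ, Complex.exp (((2 * Real.pi * (ν * t) : ℝ) : ℂ) * I) *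
      (𝓕 Ψ) ν := by
    intro t
    have h1 : 𝓕⁻ (𝓕 Ψ) t = Ψ t := by rw [FourierTransform.fourierInv_fourier_eq]
    rw [← h1, SchwartzMap.fourierInv_coe, Real.fourierInv_eq']
    simp only [smul_eq_mul, RCLike.inner_apply, conj_trivial, mul_comm t]
  have hexp : ∀ r : ℝ, ‖Complex.exp (I * (r : ℂ))‖ = 1 := fun r => by
    rw [mul_comm]; exact Complex.norm_exp_ofReal_mul_I r
  have hI : Integrable (Function.uncurry fun (p : ℝ × ℝ) (ν : ℝ) =>
      Complex.exp (I * ((p.1 * ξ + p.2 * (lam + 2 * Real.pi / δ * ν) : ℝ) : ℂ)) *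
        (f p * (𝓕 Ψ) ν)) ((volume : Measure (ℝ × ℝ)).prod (volume : Measure ℝ)) := by
    refine (f.integrable.mul_prod (𝓕 Ψ).integrable).bdd_mul (c := 1) ?_ ?_
    · exact Continuous.aestronglyMeasurable (by fun_prop)
    · exact Filter.Eventually.of_forall fun q => (hexp _).le
  have hswap := integral_integral_swap hI
  calc _ = ∫ p : ℝ × ℝ, ∫ ν : ℝ,
        Complex.exp (I * ((p.1 * ξ + p.2 * (lam + 2 * Real.pi / δ * ν) : ℝ) : ℂ)) *
          (f p * (𝓕 Ψ) ν) := by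
        rw [FT2]
        congr 1; ext p
        rw [hinv, mul_left_comm, ← integral_mul_const]
        congr 1; ext ν
        have : Complex.exp (I * ((p.1 * ξ + p.2 * (lam + 2 * Real.pi / δ * ν) : ℝ) : ℂ)) =
          Complex.exp (((2 * Real.pi * (ν * (p.2 / δ)) : ℝ) : ℂ) * I) *
            Complex.exp (I * ((p.1 * ξ + p.2 * lam : ℝ) : ℂ)) := by
          rw [← Complex.exp_add]; congr 1; push_cast; ring
        rw [this]; ring
    _ = _ := by
        rw [hswap]
        congr 1; ext ν
        rw [FT2, ← integral_const_mul]
        congr 1; ext p; ring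

/-- The squared `X̃^b_s` norm of a Schwartz function is a convergent integral, since the weight
grows polynomially. -/
lemma integrable_weight_mul_sq (G : 𝓢(ℝ × ℝ, ℂ)) {a b : ℝ} (s : ℝ) (ha : a ∈ Set.Ioo (0 : ℝ) 1)
    (hb0 : 0 < b) (hb1 : b < 1) :
    Integrable fun p : ℝ × ℝ =>
      (1 + |p.2 - disp a p.1|) ^ (2 * b) * (1 + |p.1|) ^ (2 * s) * ‖G p‖ ^ 2 := by
  obtain ⟨k, hk⟩ := exists_nat_ge (2 * |s|)
  set M := SchwartzMap.seminorm ℝ 0 0 G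
  have hM : ∀ p, ‖G p‖ ≤ M := SchwartzMap.norm_le_seminorm ℝ G
  have hcont : Continuous fun p : ℝ × ℝ =>
      (1 + |p.2 - disp a p.1|) ^ (2 * b) * (1 + |p.1|) ^ (2 * s) * ‖G p‖ ^ 2 := by
    have hd : Continuous (disp a) := by
      unfold disp
      exact continuous_id.mul (continuous_abs.rpow_const fun x => Or.inr (by linarith [ha.1]))
    have hG := G.continuous
    refine Continuous.mul (Continuous.mul ?_ ?_) (by fun_prop)
    · exact Continuous.rpow_const (by fun_prop) fun x => Or.inl (by positivity)
    · exact Continuous.rpow_const (by fun_prop) fun x => Or.inl (by positivity)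
  have hint : Integrable fun p : ℝ × ℝ =>
      9 * M * (2 ^ (6 + k) * (‖G p‖ + ‖p‖ ^ (6 + k) * ‖G p‖)) :=
    ((G.integrable.norm.add (G.integrable_pow_mul volume (6 + k))).const_mul _).const_mul _
  refine hint.mono' hcont.aestronglyMeasurable (Filter.Eventually.of_forall fun p => ?_)
  rw [Real.norm_of_nonneg (by positivity)]
  set N := ‖p‖ with hN
  have hN0 : 0 ≤ N := norm_nonneg p
  have h1 : |p.1| ≤ N := norm_fst_le p
  have h2 : |p.2| ≤ N := norm_snd_le p
  have hd : |disp a p.1| ≤ (1 + N) ^ 3 := by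
    have : |p.1| ^ (1 + a) ≤ (1 + N) ^ 2 := by
      calc |p.1| ^ (1 + a) ≤ (1 + N) ^ (1 + a) :=
            Real.rpow_le_rpow (abs_nonneg _) (by linarith) (by linarith [ha.1])
        _ ≤ (1 + N) ^ (2 : ℝ) :=
            Real.rpow_le_rpow_of_exponent_le (by linarith) (by linarith [ha.2])
        _ = _ := by norm_num
    rw [disp, abs_mul, abs_of_nonneg (by positivity : 0 ≤ |p.1| ^ (1 + a))]
    calc _ ≤ (1 + N) * (1 + N) ^ 2 := by gcongr; linarith
      _ = _ := by ring
  have hw1 : (1 + |p.2 - disp a p.1|) ^ (2 * b) ≤ 9 * (1 + N) ^ 6 := by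
    have h3 : 1 + |p.2 - disp a p.1| ≤ 3 * (1 + N) ^ 3 := by
      have := abs_sub p.2 (disp a p.1)
      nlinarith [pow_nonneg hN0 2, pow_nonneg hN0 3]
    calc _ ≤ (1 + |p.2 - disp a p.1|) ^ (2 : ℝ) :=
          Real.rpow_le_rpow_of_exponent_le (by linarith [abs_nonneg (p.2 - disp a p.1)])
            (by linarith)
      _ = (1 + |p.2 - disp a p.1|) ^ 2 := by norm_num
      _ ≤ (3 * (1 + N) ^ 3) ^ 2 := by gcongr
      _ = _ := by ring
  have hw2 : (1 + |p.1|) ^ (2 * s) ≤ (1 + N) ^ k := by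
    calc _ ≤ (1 + |p.1|) ^ (k : ℝ) :=
          Real.rpow_le_rpow_of_exponent_le (by linarith [abs_nonneg p.1])
            (by linarith [le_abs_self s])
      _ = (1 + |p.1|) ^ k := Real.rpow_natCast _ _
      _ ≤ _ := by gcongr
  have hpow : (1 + N) ^ (6 + k) ≤ 2 ^ (6 + k) * (1 + N ^ (6 + k)) := by
    calc (1 + N) ^ (6 + k) ≤ 2 ^ (6 + k - 1) * (1 ^ (6 + k) + N ^ (6 + k)) :=
          add_pow_le zero_le_one hN0 _
      _ ≤ 2 ^ (6 + k) * (1 ^ (6 + k) + N ^ (6 + k)) := by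
          gcongr
          · norm_num
          · omega
      _ = _ := by simp
  calc _ ≤ (9 * (1 + N) ^ 6) * (1 + N) ^ k * (M * ‖G p‖) := by
        rw [sq]
        gcongr
        exact hM p
    _ = 9 * M * ((1 + N) ^ (6 + k) * ‖G p‖) := by ring
    _ ≤ 9 * M * ((2 ^ (6 + k) * (1 + N ^ (6 + k))) * ‖G p‖) := by
        have : 0 ≤ M := (norm_nonneg _).trans (hM p)
        gcongr
    _ = _ := by ring

lemma lintegral_enorm_rpow_sq_lt_top (κ : 𝓢(ℝ, ℂ)) {b : ℝ} (hb0 : 0 < b) (hb1 : b ≤ 1) :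
    ∫⁻ ν, (‖κ ν‖ₑ * ENNReal.ofReal (|ν| ^ b)) ^ 2 < ⊤ := by
  set M := SchwartzMap.seminorm ℝ 0 0 κ
  have hM : ∀ p, ‖κ p‖ ≤ M := SchwartzMap.norm_le_seminorm ℝ κ
  have hint : Integrable fun ν : ℝ => M * (2 * (‖κ ν‖ + ‖ν‖ ^ 2 * ‖κ ν‖)) :=
    ((κ.integrable.norm.add (κ.integrable_pow_mul volume 2)).const_mul _).const_mul _
  refine lt_of_le_of_lt (lintegral_mono fun ν => ?_) hint.lintegral_lt_top
  rw [← ofReal_norm, ← ENNReal.ofReal_mul (norm_nonneg _),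
    ← ENNReal.ofReal_pow (by positivity)]
  apply ENNReal.ofReal_le_ofReal
  have h1 : |ν| ^ b ≤ 1 + |ν| := by
    calc |ν| ^ b ≤ (1 + |ν|) ^ b := Real.rpow_le_rpow (abs_nonneg _) (by linarith) hb0.le
      _ ≤ (1 + |ν|) ^ (1 : ℝ) :=
          Real.rpow_le_rpow_of_exponent_le (by linarith [abs_nonneg ν]) hb1
      _ = _ := Real.rpow_one _
  have hM0 : 0 ≤ M := (norm_nonneg _).trans (hM 0)
  calc (‖κ ν‖ * |ν| ^ b) ^ 2 ≤ (‖κ ν‖ * (1 + |ν|)) ^ 2 := by gcongr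
    _ = ‖κ ν‖ * ‖κ ν‖ * (1 + |ν|) ^ 2 := by ring
    _ ≤ M * ‖κ ν‖ * (2 * (1 + |ν| ^ 2)) := by
        gcongr
        · exact hM ν
        · nlinarith [sq_nonneg (1 - |ν|)]
    _ = _ := by rw [Real.norm_eq_abs]; ring

lemma lintegral_bracket_neg_lt_top {b : ℝ} (hb : 1 / 2 < b) :
    ∫⁻ τ : ℝ, ENNReal.ofReal ((1 + |τ|) ^ (-b)) ^ 2 < ⊤ := by
  have h := (integrable_one_add_norm (E := ℝ) (μ := volume) (r := 2 * b)
    (by simp; linarith)).lintegral_lt_top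
  refine lt_of_le_of_lt (lintegral_mono fun τ => ?_) h
  rw [← ENNReal.ofReal_pow (by positivity), ← Real.rpow_natCast, ← Real.rpow_mul (by positivity)]
  apply le_of_eq
  congr 2
  push_cast; ring

theorem statement17 (a : ℝ) (ha : a ∈ Set.Ioo (0 : ℝ) 1) (s : ℝ)
    (b : ℝ) (hb : b ∈ Set.Ioo (1 / 2 : ℝ) 1)
    (ψ : ℝ → ℝ) (hψ : TimeCutoff ψ) :
    ∃ C > 0, ∀ δ ∈ Set.Ioo (0 : ℝ) 1, ∀ f : SchwartzMap (ℝ × ℝ) ℂ,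
      XtildeNorm a b s (fun p : ℝ × ℝ => (ψ (p.2 / δ) : ℂ) * f p) ≤
        C * δ ^ (1 / 2 - b) * XtildeNorm a b s (fun p => f p) := by
  obtain ⟨hb0, hb1⟩ := hb
  have hbpos : 0 < b := by linarith
  have hcs : HasCompactSupport fun t => (ψ t : ℂ) := by
    refine HasCompactSupport.intro (isCompact_Icc (a := (-1 : ℝ)) (b := 1)) fun t ht => ?_
    by_contra h
    exact ht (abs_le.1 (hψ.supp t fun h0 => h (by simp [h0])))
  let Ψ : 𝓢(ℝ, ℂ) := hcs.toSchwartzMap (Complex.ofRealCLM.contDiff.comp hψ.smooth)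
  have hΨ : ∀ t, Ψ t = (ψ t : ℂ) := fun t => rfl
  set A := ∫⁻ ν, ‖(𝓕 Ψ) ν‖ₑ with hA
  set B := ∫⁻ ν, (‖(𝓕 Ψ) ν‖ₑ * ENNReal.ofReal (|ν| ^ b)) ^ 2 with hB
  set D := ∫⁻ τ : ℝ, ENNReal.ofReal ((1 + |τ|) ^ (-b)) ^ 2 with hD
  have hAt : A ≠ ⊤ := (𝓕 Ψ).integrable.2.ne
  have hBt : B ≠ ⊤ := (lintegral_enorm_rpow_sq_lt_top (𝓕 Ψ) hbpos hb1.le).ne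
  have hDt : D ≠ ⊤ := (lintegral_bracket_neg_lt_top hb0).ne
  set K : ℝ := 2 * (A.toReal ^ 2 + (2 * Real.pi) ^ (2 * b - 1) * (B.toReal * D.toReal)) with hK
  have hK0 : 0 ≤ K := by positivity
  -- `K + 1` rather than `K` makes the constant positive even when `ψ = 0`
  refine ⟨(K + 1) ^ (1 / 2 : ℝ), by positivity, fun δ hδ f => ?_⟩
  obtain ⟨hδ0, hδ1⟩ := hδ
  obtain ⟨G, hG⟩ := exists_schwartz_FT2 f
  set c := 2 * Real.pi / δ with hc
  have hcpos : 0 < c := by positivity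
  have hδp : 0 < δ ^ (1 - 2 * b) := by positivity
  have hδone : 1 ≤ δ ^ (1 - 2 * b) :=
    Real.one_le_rpow_of_pos_of_le_one_of_nonpos hδ0 hδ1.le (by linarith)
  have hconst : 2 * (A ^ 2 + ENNReal.ofReal (c ^ (2 * b - 1)) * (B * D)) ≤
      ENNReal.ofReal ((K + 1) * δ ^ (1 - 2 * b)) := by
    have hcd : c ^ (2 * b - 1) = (2 * Real.pi) ^ (2 * b - 1) * δ ^ (1 - 2 * b) := by
      rw [hc, Real.div_rpow (by positivity) hδ0.le, div_eq_mul_inv, ← Real.rpow_neg hδ0.le]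
      congr 2; ring
    rw [← ENNReal.ofReal_toReal hAt, ← ENNReal.ofReal_toReal hBt, ← ENNReal.ofReal_toReal hDt,
      ← ENNReal.ofReal_mul (by positivity), ← ENNReal.ofReal_mul (by positivity),
      ← ENNReal.ofReal_pow (by positivity), ← ENNReal.ofReal_add (by positivity) (by positivity),
      ← ENNReal.ofReal_ofNat 2, ← ENNReal.ofReal_mul (by positivity)]
    apply ENNReal.ofReal_le_ofReal
    rw [hcd, hK]
    have := sq_nonneg A.toReal
    nlinarith
  -- the estimate on each fibre `ξ = const`, translated by `ω(ξ)`
  have fibre : ∀ ξ : ℝ, ∫⁻ lam : ℝ, ENNReal.ofReal ((1 + |lam - disp a ξ|) ^ (2 * b) *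
        (1 + |ξ|) ^ (2 * s) * ‖FT2 (fun p => (ψ (p.2 / δ) : ℂ) * f p) ξ lam‖ ^ 2) ≤
      ENNReal.ofReal ((K + 1) * δ ^ (1 - 2 * b)) *
        ∫⁻ lam : ℝ, ENNReal.ofReal ((1 + |lam - disp a ξ|) ^ (2 * b) *
          (1 + |ξ|) ^ (2 * s) * ‖G (ξ, lam)‖ ^ 2) := by
    intro ξ
    have hsplit : ∀ (lam : ℝ) (z : ℂ), ENNReal.ofReal ((1 + |lam - disp a ξ|) ^ (2 * b) *
        (1 + |ξ|) ^ (2 * s) * ‖z‖ ^ 2) = ENNReal.ofReal ((1 + |ξ|) ^ (2 * s)) *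
          (ENNReal.ofReal ((1 + |lam - disp a ξ|) ^ b) * ‖z‖ₑ) ^ 2 := by
      intro lam z
      rw [← ofReal_norm, ← ENNReal.ofReal_mul (by positivity),
        ← ENNReal.ofReal_pow (by positivity), ← ENNReal.ofReal_mul (by positivity)]
      congr 1
      rw [mul_pow, mul_comm 2 b, Real.rpow_mul (by positivity) b 2, Real.rpow_ofNat]
      ring
    have hGc := G.continuous
    have hκm : Measurable fun ν => ‖(𝓕 Ψ) ν‖ₑ := (𝓕 Ψ).continuous.measurable.enorm
    have hgm : Measurable fun τ : ℝ => ‖G (ξ, τ + disp a ξ)‖ₑ :=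
      (show Continuous fun τ : ℝ => G (ξ, τ + disp a ξ) by fun_prop).measurable.enorm
    have h0 := weighted_convolution_bound hκm hgm hbpos hb1.le hcpos
    simp only [hsplit]
    rw [lintegral_const_mul' _ _ ENNReal.ofReal_ne_top, lintegral_const_mul' _ _ ENNReal.ofReal_ne_top,
      mul_left_comm]
    refine mul_le_mul' le_rfl ?_
    rw [← lintegral_add_right_eq_self _ (disp a ξ),
      ← lintegral_add_right_eq_self (fun lam : ℝ => (ENNReal.ofReal ((1 + |lam - disp a ξ|) ^ b) *
        ‖G (ξ, lam)‖ₑ) ^ 2) (disp a ξ)]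
    simp only [add_sub_cancel_right]
    refine le_trans (lintegral_mono fun τ => ?_) (h0.trans (mul_le_mul' hconst le_rfl))
    refine pow_le_pow_left' (mul_le_mul' le_rfl ?_) 2
    have hconv := FT2_cutoff_mul Ψ f δ ξ (τ + disp a ξ)
    simp only [hΨ] at hconv
    rw [hconv]
    refine (enorm_integral_le_lintegral_enorm _).trans (le_of_eq ?_)
    congr 1; ext ν
    rw [enorm_mul, hG (ξ, _)]
    congr 4
    ring
  have hGint := integrable_weight_mul_sq G s ha hbpos hb1
  have main : (∫ p : ℝ × ℝ, (1 + |p.2 - disp a p.1|) ^ (2 * b) * (1 + |p.1|) ^ (2 * s) *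
        ‖FT2 (fun p => (ψ (p.2 / δ) : ℂ) * f p) p.1 p.2‖ ^ 2) ≤
      ((K + 1) * δ ^ (1 - 2 * b)) * ∫ p : ℝ × ℝ, (1 + |p.2 - disp a p.1|) ^ (2 * b) *
        (1 + |p.1|) ^ (2 * s) * ‖G p‖ ^ 2 := by
    have hnn : 0 ≤ ∫ p : ℝ × ℝ, (1 + |p.2 - disp a p.1|) ^ (2 * b) *
        (1 + |p.1|) ^ (2 * s) * ‖G p‖ ^ 2 := integral_nonneg fun p => by positivity
    by_cases hi : Integrable fun p : ℝ × ℝ => (1 + |p.2 - disp a p.1|) ^ (2 * b) *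
        (1 + |p.1|) ^ (2 * s) * ‖FT2 (fun p => (ψ (p.2 / δ) : ℂ) * f p) p.1 p.2‖ ^ 2
    · rw [← ENNReal.ofReal_le_ofReal_iff (by positivity), ENNReal.ofReal_mul (by positivity),
        ofReal_integral_eq_lintegral_ofReal hi (Filter.Eventually.of_forall fun p => by positivity),
        ofReal_integral_eq_lintegral_ofReal hGint
          (Filter.Eventually.of_forall fun p => by positivity),
        Measure.volume_eq_prod, lintegral_prod _ (by
          rw [← Measure.volume_eq_prod]; exact hi.1.aemeasurable.ennreal_ofReal),
        lintegral_prod _ (by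
          rw [← Measure.volume_eq_prod]; exact hGint.1.aemeasurable.ennreal_ofReal),
        ← lintegral_const_mul' _ _ ENNReal.ofReal_ne_top]
      exact lintegral_mono fibre
    -- a non-integrable left side would have integral `0` by convention
    · rw [integral_undef hi]
      positivity
  unfold XtildeNorm
  simp only [hG]
  have hnn : 0 ≤ ∫ p : ℝ × ℝ, (1 + |p.2 - disp a p.1|) ^ (2 * b) *
        (1 + |p.1|) ^ (2 * s) * ‖G p‖ ^ 2 := integral_nonneg fun p => by positivity
  refine (Real.rpow_le_rpow (integral_nonneg fun p => by positivity) main (by norm_num)).trans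
    (le_of_eq ?_)
  rw [Real.mul_rpow (by positivity) hnn, Real.mul_rpow (by positivity) (by positivity),
    ← Real.rpow_mul hδ0.le]
  congr 3
  ring
end
end
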